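/- Let (s,u) be a global-in-time solution of problem (P) with initial data (s₀,φ) ∈ W. Then lim_{t→∞} ‖u(t)‖_{L^∞} = 0. -/

import Mathlib

open Set MeasureTheory Filter Topology Real
open scoped ENNReal

noncomputable section

/-- `(s₀, φ)` belongs to the class `W`: `s₀ ∈ (0,∞)`, `φ` is Lipschitz on `[0,s₀]`,
not identically zero, nonnegative there, and vanishes at `s₀`. -/
def memW (s₀ : ℝ) (φ : ℝ → ℝ) : Prop :=
  0 < s₀ ∧ (∃ K : NNReal, LipschitzOnWith K φ (Icc 0 s₀)) ∧
    (∃ x ∈ Icc 0 s₀, φ x ≠ 0) ∧ (∀ x ∈ Icc 0 s₀, 0 ≤ φ x) ∧ φ s₀ = 0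

/-- `(s,u)` is a solution of the one-phase Stefan problem (P) on `(0,T]` (finite `T`)
with exponent `p` and initial data `(s₀,φ)`. -/
structure IsSolOn (p s₀ : ℝ) (φ : ℝ → ℝ) (T : ℝ) (s : ℝ → ℝ) (u : ℝ → ℝ → ℝ) : Prop where
  T_pos : 0 < T
  s_cont : ContinuousOn s (Icc 0 T)
  s_diff : ∀ t ∈ Ioc 0 T, DifferentiableAt ℝ s t
  s_deriv_cont : ContinuousOn (deriv s) (Ioc 0 T)
  s_pos : ∀ t ∈ Icc 0 T, 0 < s t
  ut_diff : ∀ t ∈ Ioc 0 T, ∀ x ∈ Ioo 0 (s t), DifferentiableAt ℝ (fun τ => u τ x) t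
  ux_diff : ∀ t ∈ Ioc 0 T, ∀ x ∈ Ioo 0 (s t), DifferentiableAt ℝ (u t) x
  uxx_diff : ∀ t ∈ Ioc 0 T, ∀ x ∈ Ioo 0 (s t), DifferentiableAt ℝ (deriv (u t)) x
  ut_cont : ContinuousOn (fun q : ℝ × ℝ => deriv (fun τ => u τ q.2) q.1)
      {q : ℝ × ℝ | q.1 ∈ Ioc 0 T ∧ q.2 ∈ Ioo 0 (s q.1)}
  uxx_cont : ContinuousOn (fun q : ℝ × ℝ => deriv (deriv (u q.1)) q.2)
      {q : ℝ × ℝ | q.1 ∈ Ioc 0 T ∧ q.2 ∈ Ioo 0 (s q.1)}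
  ux_cont : ContinuousOn (fun q : ℝ × ℝ => deriv (u q.1) q.2)
      {q : ℝ × ℝ | q.1 ∈ Ioc 0 T ∧ q.2 ∈ Icc 0 (s q.1)}
  u_cont : ContinuousOn (fun q : ℝ × ℝ => u q.1 q.2)
      {q : ℝ × ℝ | q.1 ∈ Icc 0 T ∧ q.2 ∈ Icc 0 (s q.1)}
  u_nonneg : ∀ t ∈ Icc 0 T, ∀ x ∈ Icc 0 (s t), 0 ≤ u t x
  heat : ∀ t ∈ Ioc 0 T, ∀ x ∈ Ioo 0 (s t),
      deriv (fun τ => u τ x) t = deriv (deriv (u t)) x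
  bc_zero : ∀ t ∈ Ioc 0 T, -deriv (u t) 0 = u t 0 ^ p
  bc_free : ∀ t ∈ Ioc 0 T, u t (s t) = 0
  stefan : ∀ t ∈ Ioc 0 T, deriv s t = -deriv (u t) (s t)
  init : ∀ x ∈ Icc 0 s₀, u 0 x = φ x
  init_s : s 0 = s₀

/-- `(s,u)` is a global-in-time solution of problem (P). -/
def IsGlobalSol (p s₀ : ℝ) (φ : ℝ → ℝ) (s : ℝ → ℝ) (u : ℝ → ℝ → ℝ) : Prop :=
  ∀ T : ℝ, 0 < T → IsSolOn p s₀ φ T s u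

/-- `Tm ∈ (0,∞]` is the maximal existence time of the solution `(s,u)` of (P) with
initial data `(s₀,φ)`: the solution exists on `(0,T]` for every `T < Tm`, and for
`T > Tm` problem (P) admits no solution on `(0,T]`. -/
def IsMaxSol (p s₀ : ℝ) (φ : ℝ → ℝ) (Tm : ℝ≥0∞) (s : ℝ → ℝ) (u : ℝ → ℝ → ℝ) : Prop :=
  0 < Tm ∧
    (∀ T : ℝ, 0 < T → ENNReal.ofReal T < Tm → IsSolOn p s₀ φ T s u) ∧
    (∀ T : ℝ, Tm < ENNReal.ofReal T → ¬∃ σ v, IsSolOn p s₀ φ T σ v)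

/-- The sup norm `‖u(t)‖_{L^∞(0,s(t))}`. -/
def supNorm (s : ℝ → ℝ) (u : ℝ → ℝ → ℝ) (t : ℝ) : ℝ :=
  sSup (u t '' Ioo 0 (s t))

/-- The `L¹` norm `‖u(t)‖_{L¹(0,s(t))}` of the nonnegative function `u(t,·)`. -/
def L1Norm (s : ℝ → ℝ) (u : ℝ → ℝ → ℝ) (t : ℝ) : ℝ :=
  ∫ x in (0:ℝ)..(s t), u t x

/-- The energy `E(s(t),u(t))`. -/
def energy (p : ℝ) (s : ℝ → ℝ) (u : ℝ → ℝ → ℝ) (t : ℝ) : ℝ :=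
  1 / 2 * (∫ x in (0:ℝ)..(s t), (deriv (u t) x) ^ 2) - u t 0 ^ (p + 1) / (p + 1)

lemma avg_eq (f : ℝ → ℝ) (t h : ℝ) (hh : h ≠ 0) :
    ∫ r in (0:ℝ)..1, f (t + h * r) = h⁻¹ * ∫ τ in t..(t+h), f τ := by
  have := intervalIntegral.integral_comp_add_mul (a := 0) (b := 1) f hh t
  simpa using this

lemma avg_hasDeriv (f : ℝ → ℝ) (hf : Continuous f) (h : ℝ) (hh : h ≠ 0) (t : ℝ) :
    HasDerivAt (fun t => ∫ r in (0:ℝ)..1, f (t + h * r)) ((f (t+h) - f t) / h) t := by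
  have e : (fun t => ∫ r in (0:ℝ)..1, f (t + h * r)) =
      fun t => h⁻¹ * ((∫ τ in (0:ℝ)..(t+h), f τ) - ∫ τ in (0:ℝ)..t, f τ) := by
    funext t
    rw [avg_eq f t h hh, intervalIntegral.integral_interval_sub_left] <;>
      exact hf.intervalIntegrable _ _
  rw [e]
  have h1 : HasDerivAt (fun t => ∫ τ in (0:ℝ)..t, f τ) (f t) t :=
    hf.integral_hasStrictDerivAt 0 t |>.hasDerivAt
  have h2 : HasDerivAt (fun t => ∫ τ in (0:ℝ)..(t+h), f τ) (f (t+h)) t := by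
    have := (hf.integral_hasStrictDerivAt 0 (t+h)).hasDerivAt
    exact this.comp_add_const t h
  have := (h2.sub h1).const_mul h⁻¹
  rw [div_eq_inv_mul]
  exact this

lemma slope_cont (m : ℝ → ℝ) (t : ℝ) (S : Set ℝ) (hm : ContinuousAt m t) :
    HasDerivWithinAt (fun t' => (t' - t) * m t') (m t) S t := by
  apply HasDerivAt.hasDerivWithinAt
  rw [hasDerivAt_iff_tendsto_slope]
  refine (hm.tendsto.mono_left nhdsWithin_le_nhds).congr' ?_
  filter_upwards [self_mem_nhdsWithin] with y hy
  have : y - t ≠ 0 := sub_ne_zero.mpr hy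
  simp only [slope_def_field]
  field_simp
  ring

lemma leibniz (s ds : ℝ → ℝ) (hs : Continuous s) (f g : ℝ → ℝ → ℝ)
    (hf : Continuous (Function.uncurry f)) (hg : Continuous (Function.uncurry g))
    (hfg : ∀ t x, HasDerivAt (fun τ => f τ x) (g t x) t) (t : ℝ)
    (hds : HasDerivWithinAt s (ds t) (Ioi t) t) :
    HasDerivWithinAt (fun t => ∫ x in (0:ℝ)..s t, f t x)
      (ds t * f t (s t) + ∫ x in (0:ℝ)..s t, g t x) (Ioi t) t := by
  set m : ℝ → ℝ := fun t' => ∫ x in (0:ℝ)..s t', ∫ r in (0:ℝ)..1, g (t + (t' - t) * r) x with hm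
  have hmc : Continuous m := by
    apply intervalIntegral.continuous_parametric_intervalIntegral_of_continuous _ hs
    fun_prop
  have hmt : m t = ∫ x in (0:ℝ)..s t, g t x := by simp [hm]
  have e : (fun t' => ∫ x in (0:ℝ)..s t', f t' x) =
      fun t' => (∫ x in (0:ℝ)..s t', f t x) + (t' - t) * m t' := by
    funext t'
    by_cases htt : t' = t
    · subst htt; simp
    have hne : t' - t ≠ 0 := sub_ne_zero.mpr htt
    have : ∀ x, f t' x = f t x + (t' - t) * ∫ r in (0:ℝ)..1, g (t + (t' - t) * r) x := by
      intro x
      rw [avg_eq (fun τ => g τ x) t (t'-t) hne, mul_inv_cancel_left₀ hne]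
      rw [intervalIntegral.integral_eq_sub_of_hasDerivAt (f := fun τ => f τ x)
        (fun y _ => hfg y x) (Continuous.intervalIntegrable (by fun_prop) _ _)]
      simp
    rw [hm]
    simp only
    rw [← intervalIntegral.integral_const_mul, ← intervalIntegral.integral_add]
    · apply intervalIntegral.integral_congr
      intro x _
      exact this x
    · exact Continuous.intervalIntegrable (by fun_prop) _ _
    · exact Continuous.intervalIntegrable (by fun_prop) _ _
  rw [e]
  have h1 : HasDerivWithinAt (fun t' => ∫ x in (0:ℝ)..s t', f t x) (ds t * f t (s t)) (Ioi t) t := by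
    have hc : Continuous (f t) := by fun_prop
    have := (hc.integral_hasStrictDerivAt 0 (s t)).hasDerivAt
    rw [mul_comm]
    exact this.comp_hasDerivWithinAt t hds
  have h2 := slope_cont m t (Ioi t) hmc.continuousAt
  rw [hmt] at h2
  exact h1.add h2

lemma cs_int (f : ℝ → ℝ) (hf : Continuous f) (a b : ℝ) (hab : a ≤ b) :
    (∫ x in a..b, f x)^2 ≤ (b - a) * ∫ x in a..b, (f x)^2 := by
  rcases hab.eq_or_lt with h | h
  · subst h; simp
  set J := ∫ x in a..b, f x with hJ
  have h1 : 0 ≤ ∫ x in a..b, (f x - J / (b-a))^2 :=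
    intervalIntegral.integral_nonneg hab (fun x _ => sq_nonneg _)
  have h2 : ∫ x in a..b, (f x - J / (b-a))^2 =
      (∫ x in a..b, (f x)^2) - 2 * (J/(b-a)) * J + (J/(b-a))^2 * (b-a) := by
    have : ∀ x, (f x - J / (b-a))^2 = (f x)^2 - 2 * (J/(b-a)) * f x + (J/(b-a))^2 := by
      intro x; ring
    simp_rw [this]
    rw [intervalIntegral.integral_add, intervalIntegral.integral_sub,
      intervalIntegral.integral_const_mul, intervalIntegral.integral_const]
    · simp [hJ]; ring
    all_goals exact Continuous.intervalIntegrable (by fun_prop) _ _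
  have hp : 0 < b - a := sub_pos.mpr h
  rw [h2] at h1
  have h3 : (∫ x in a..b, (f x)^2) - 2 * (J/(b-a)) * J + (J/(b-a))^2 * (b-a) =
    (∫ x in a..b, (f x)^2) - J^2/(b-a) := by field_simp; ring
  rw [h3, sub_nonneg, div_le_iff₀ hp] at h1
  linarith

lemma swap_cont (f : ℝ → ℝ → ℝ) (hf : Continuous (Function.uncurry f)) (a b c d : ℝ) :
    ∫ x in a..b, ∫ y in c..d, f x y = ∫ y in c..d, ∫ x in a..b, f x y := by
  apply intervalIntegral_intervalIntegral_swap
  have h : IntegrableOn (Function.uncurry f) (uIcc a b ×ˢ uIcc c d) (volume.prod volume) :=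
    hf.continuousOn.integrableOn_compact (isCompact_uIcc.prod isCompact_uIcc)
  exact h.mono_set (Set.prod_mono uIoc_subset_uIcc uIoc_subset_uIcc)

lemma hasDeriv_of_int (F f : ℝ → ℝ) (S : ℝ) (hf : Continuous f)
    (h : ∀ x ∈ Icc 0 S, F x = F 0 + ∫ y in (0:ℝ)..x, f y) (x : ℝ) (hx : x ∈ Ioo 0 S) :
    HasDerivAt F (f x) x := by
  have h1 : HasDerivAt (fun x => F 0 + ∫ y in (0:ℝ)..x, f y) (f x) x :=
    ((hf.integral_hasStrictDerivAt 0 x).hasDerivAt).const_add _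
  refine h1.congr_of_eventuallyEq ?_
  filter_upwards [Icc_mem_nhds hx.1 hx.2] with y hy using h y hy

lemma parts (F G f g : ℝ → ℝ) (S : ℝ) (hS : 0 ≤ S) (hF : Continuous F) (hG : Continuous G)
    (hf : Continuous f) (hg : Continuous g)
    (h1 : ∀ x ∈ Icc 0 S, F x = F 0 + ∫ y in (0:ℝ)..x, f y)
    (h2 : ∀ x ∈ Icc 0 S, G x = G 0 + ∫ y in (0:ℝ)..x, g y) :
    ∫ x in (0:ℝ)..S, F x * g x = F S * G S - F 0 * G 0 - ∫ x in (0:ℝ)..S, f x * G x := by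
  apply intervalIntegral.integral_mul_deriv_eq_deriv_mul_of_hasDerivAt
  · exact hF.continuousOn
  · exact hG.continuousOn
  · intro x hx
    rw [min_eq_left hS, max_eq_right hS] at hx
    exact hasDeriv_of_int F f S hf h1 x hx
  · intro x hx
    rw [min_eq_left hS, max_eq_right hS] at hx
    exact hasDeriv_of_int G g S hg h2 x hx
  · exact hf.intervalIntegrable _ _
  · exact hg.intervalIntegrable _ _

structure AbsSol (p : ℝ) (s ds : ℝ → ℝ) (v w : ℝ → ℝ → ℝ) : Prop where
  s_cont : Continuous s
  s_mono : Monotone s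
  s_pos : ∀ t, 0 < s t
  ds_cont : Continuous ds
  ds_nonneg : ∀ t, 0 ≤ ds t
  s_int : ∀ t t', 1 ≤ t → t ≤ t' → s t' = s t + ∫ τ in t..t', ds τ
  v_cont : Continuous (Function.uncurry v)
  w_cont : Continuous (Function.uncurry w)
  v_nonneg : ∀ t x, 0 ≤ v t x
  F1 : ∀ t x, 0 ≤ x → x ≤ s t → v t x = v t 0 + ∫ y in (0:ℝ)..x, w t y
  F2 : ∀ t t' x, 1 ≤ t → t ≤ t' → 0 ≤ x → x ≤ s t →
    ∫ y in (0:ℝ)..x, (v t' y - v t y) = ∫ τ in t..t', (w τ x - w τ 0)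
  bc0 : ∀ t, w t 0 = -(v t 0) ^ p
  bcs : ∀ t, v t (s t) = 0
  stefan : ∀ t, ds t = -w t (s t)

def St (f : ℝ → ℝ → ℝ) (h t x : ℝ) : ℝ := ∫ r in (0:ℝ)..1, f (t + h * r) x
def Dq (f : ℝ → ℝ → ℝ) (h t x : ℝ) : ℝ := (f (t + h) x - f t x) / h

lemma St_cont3 (f : ℝ → ℝ → ℝ) (hf : Continuous (Function.uncurry f)) :
    Continuous (fun q : ℝ × ℝ × ℝ => St f q.1 q.2.1 q.2.2) := by
  unfold St; fun_prop

lemma St_cont (f : ℝ → ℝ → ℝ) (hf : Continuous (Function.uncurry f)) (h : ℝ) :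
    Continuous (Function.uncurry (St f h)) := by
  unfold St; fun_prop

lemma Dq_cont (f : ℝ → ℝ → ℝ) (hf : Continuous (Function.uncurry f)) (h : ℝ) :
    Continuous (Function.uncurry (Dq f h)) := by
  unfold Dq; fun_prop

lemma St_zero (f : ℝ → ℝ → ℝ) (t x : ℝ) : St f 0 t x = f t x := by simp [St]

lemma St_hasDeriv (f : ℝ → ℝ → ℝ) (hf : Continuous (Function.uncurry f)) (h : ℝ) (hh : h ≠ 0)
    (t x : ℝ) : HasDerivAt (fun τ => St f h τ x) (Dq f h t x) t :=
  avg_hasDeriv (fun τ => f τ x) (by fun_prop) h hh t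

namespace AbsSol
variable {p : ℝ} {s ds : ℝ → ℝ} {v w : ℝ → ℝ → ℝ}

lemma s_deriv (H : AbsSol p s ds v w) (t : ℝ) (ht : 1 ≤ t) :
    HasDerivWithinAt s (ds t) (Ioi t) t := by
  have h1 : HasDerivAt (fun t' => s t + ∫ τ in t..t', ds τ) (ds t) t :=
    ((H.ds_cont.integral_hasStrictDerivAt t t).hasDerivAt).const_add _
  refine h1.hasDerivWithinAt.congr ?_ (by simp)
  intro y hy
  exact H.s_int t y ht (le_of_lt hy)

lemma StV_x (H : AbsSol p s ds v w) (h t x : ℝ) (hh : 0 < h) (hx : x ∈ Icc 0 (s t)) :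
    St v h t x = St v h t 0 + ∫ y in (0:ℝ)..x, St w h t y := by
  have hv := H.v_cont
  have hw := H.w_cont
  unfold St
  rw [← swap_cont (fun r y => w (t + h * r) y) (by fun_prop) 0 1 0 x,
    ← intervalIntegral.integral_add]
  · apply intervalIntegral.integral_congr
    intro r hr
    rw [uIcc_of_le zero_le_one] at hr
    exact H.F1 _ _ hx.1 (hx.2.trans (H.s_mono (by nlinarith [hr.1])))
  · exact Continuous.intervalIntegrable (by fun_prop) _ _
  · exact Continuous.intervalIntegrable (by fun_prop) _ _

lemma StW_x (H : AbsSol p s ds v w) (h t x : ℝ) (hh : 0 < h) (ht : 1 ≤ t)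
    (hx : x ∈ Icc 0 (s t)) :
    St w h t x = St w h t 0 + ∫ y in (0:ℝ)..x, Dq v h t y := by
  have hv := H.v_cont
  have hw := H.w_cont
  unfold St Dq
  rw [avg_eq (fun τ => w τ x) t h hh.ne', avg_eq (fun τ => w τ 0) t h hh.ne',
    intervalIntegral.integral_div, H.F2 t (t+h) x ht (by linarith) hx.1 hx.2,
    intervalIntegral.integral_sub]
  · ring
  · exact Continuous.intervalIntegrable (by fun_prop) _ _
  · exact Continuous.intervalIntegrable (by fun_prop) _ _

lemma Dqv_x (H : AbsSol p s ds v w) (h t x : ℝ) (hh : 0 < h)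
    (hx : x ∈ Icc 0 (s t)) :
    Dq v h t x = Dq v h t 0 + ∫ y in (0:ℝ)..x, Dq w h t y := by
  have hv := H.v_cont
  have hw := H.w_cont
  unfold Dq
  rw [intervalIntegral.integral_div, intervalIntegral.integral_sub,
    H.F1 t x hx.1 hx.2, H.F1 (t+h) x hx.1 (hx.2.trans (H.s_mono (by linarith)))]
  · ring
  · exact Continuous.intervalIntegrable (by fun_prop) _ _
  · exact Continuous.intervalIntegrable (by fun_prop) _ _

lemma energy_h (H : AbsSol p s ds v w) (h α β : ℝ) (hh : 0 < h) (hα : 1 ≤ α) (hαβ : α ≤ β) :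
    (∫ x in (0:ℝ)..s β, (St w h β x)^2) - (∫ x in (0:ℝ)..s α, (St w h α x)^2) =
    ∫ t in α..β, (ds t * (St w h t (s t))^2 + 2 * (St w h t (s t) * Dq v h t (s t))
      - 2 * (St w h t 0 * Dq v h t 0) - 2 * ∫ x in (0:ℝ)..s t, (Dq v h t x)^2) := by
  have hv := H.v_cont
  have hw := H.w_cont
  have hs := H.s_cont
  have hds := H.ds_cont
  have hW := St_cont w hw h
  have hQ := Dq_cont w hw h
  have hD := Dq_cont v hv h
  symm
  apply intervalIntegral.integral_eq_sub_of_hasDeriv_right_of_le hαβ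
  · apply Continuous.continuousOn
    apply intervalIntegral.continuous_parametric_intervalIntegral_of_continuous _ hs
    fun_prop
  · intro t ht
    have ht1 : 1 ≤ t := hα.trans ht.1.le
    have := leibniz s ds hs (fun t x => (St w h t x)^2) (fun t x => 2 * (St w h t x * Dq w h t x))
      (by fun_prop) (by fun_prop) (fun t x => by
        refine ((St_hasDeriv w hw h hh.ne' t x).pow 2).congr_deriv ?_
        simp; ring) t (H.s_deriv t ht1)
    refine this.congr_deriv ?_
    rw [intervalIntegral.integral_const_mul, parts (St w h t) (Dq v h t) (Dq v h t) (Dq w h t) (s t)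
      (H.s_pos t).le (by fun_prop) (by fun_prop) (by fun_prop) (by fun_prop)
      (fun x hx => H.StW_x h t x hh ht1 hx) (fun x hx => H.Dqv_x h t x hh hx)]
    simp only [← pow_two]
    ring
  · apply Continuous.intervalIntegrable
    have : Continuous fun t => ∫ x in (0:ℝ)..s t, (Dq v h t x)^2 := by
      apply intervalIntegral.continuous_parametric_intervalIntegral_of_continuous _ hs
      fun_prop
    fun_prop

lemma VD_parts (H : AbsSol p s ds v w) (h t : ℝ) (hh : 0 < h) (ht : 1 ≤ t) :
    ∫ x in (0:ℝ)..s t, St v h t x * Dq v h t x =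
      St v h t (s t) * St w h t (s t) - St v h t 0 * St w h t 0
        - ∫ x in (0:ℝ)..s t, (St w h t x)^2 := by
  have hv := H.v_cont
  have hw := H.w_cont
  have hW := St_cont w hw h
  have hV := St_cont v hv h
  have hD := Dq_cont v hv h
  rw [parts (St v h t) (St w h t) (St w h t) (Dq v h t) (s t)
      (H.s_pos t).le (by fun_prop) (by fun_prop) (by fun_prop) (by fun_prop)
      (fun x hx => H.StV_x h t x hh hx) (fun x hx => H.StW_x h t x hh ht hx)]
  simp only [← pow_two]

lemma L2_h (H : AbsSol p s ds v w) (h α β : ℝ) (hh : 0 < h) (hα : 1 ≤ α) (hαβ : α ≤ β) :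
    (∫ x in (0:ℝ)..s β, (St v h β x)^2) - (∫ x in (0:ℝ)..s α, (St v h α x)^2) =
    ∫ t in α..β, (ds t * (St v h t (s t))^2
        + 2 * ∫ x in (0:ℝ)..s t, St v h t x * Dq v h t x) := by
  have hv := H.v_cont
  have hs := H.s_cont
  have hds := H.ds_cont
  have hV := St_cont v hv h
  have hD := Dq_cont v hv h
  symm
  apply intervalIntegral.integral_eq_sub_of_hasDeriv_right_of_le hαβ
  · apply Continuous.continuousOn
    apply intervalIntegral.continuous_parametric_intervalIntegral_of_continuous _ hs
    fun_prop
  · intro t ht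
    have ht1 : 1 ≤ t := hα.trans ht.1.le
    have := leibniz s ds hs (fun t x => (St v h t x)^2) (fun t x => 2 * (St v h t x * Dq v h t x))
      (by fun_prop) (by fun_prop) (fun t x => by
        refine ((St_hasDeriv v hv h hh.ne' t x).pow 2).congr_deriv ?_
        simp; ring) t (H.s_deriv t ht1)
    refine this.congr_deriv ?_
    rw [intervalIntegral.integral_const_mul]
  · apply Continuous.intervalIntegrable
    have : Continuous fun t => ∫ x in (0:ℝ)..s t, St v h t x * Dq v h t x := by
      apply intervalIntegral.continuous_parametric_intervalIntegral_of_continuous _ hs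
      fun_prop
    fun_prop

end AbsSol

lemma chain_half (a : ℝ → ℝ) (ha : Continuous a) (g g' G : ℝ → ℝ) (hg' : Continuous g')
    (hgd : ∀ x, HasDerivAt g (g' x) x) (hGd : ∀ x, HasDerivAt G (g x) x)
    (α β C h0 : ℝ) (hαβ : α ≤ β) (hh0 : 0 < h0) (hC0 : 0 ≤ C)
    (hC : ∀ t ∈ Icc α β, ∀ k, 0 < k → k < h0 → |a (t + k) - a t| ≤ C * √k) :
    Tendsto (fun h => ∫ t in α..β, (∫ r in (0:ℝ)..1, g (a (t + h * r))) * ((a (t+h) - a t) / h))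
      (𝓝[>] 0) (𝓝 (G (a β) - G (a α))) := by
  have hg : Continuous g := continuous_iff_continuousAt.2 fun x => (hgd x).continuousAt
  have hG : Continuous G := continuous_iff_continuousAt.2 fun x => (hGd x).continuousAt
  set A : ℝ → ℝ → ℝ := fun h t => ∫ r in (0:ℝ)..1, a (t + h * r) with hA
  have hAc : Continuous (Function.uncurry A) := by rw [hA]; fun_prop
  have hA0 : ∀ t, A 0 t = a t := by intro t; simp [hA]
  set ρ : ℝ → ℝ → ℝ → ℝ := fun h t r =>
    ∫ θ in (0:ℝ)..1, (g' (A h t + θ * (a (t + h * r) - A h t)) - g' (A h t)) with hρ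
  have hρc : Continuous (fun q : ℝ × ℝ × ℝ => ρ q.1 q.2.1 q.2.2) := by
    rw [hρ]; fun_prop
  have hρ0 : ∀ t r, ρ 0 t r = 0 := by intro t r; simp [hρ, hA0]
  have hρe : ∀ h t r, g (a (t + h * r)) =
      g (A h t) + g' (A h t) * (a (t + h * r) - A h t) + (a (t + h * r) - A h t) * ρ h t r := by
    intro h t r
    have e1 : (a (t + h * r) - A h t) * ∫ θ in (0:ℝ)..1, g' (A h t + θ * (a (t + h * r) - A h t))
        = g (a (t + h * r)) - g (A h t) := by
      have := intervalIntegral.smul_integral_comp_add_mul (a := 0) (b := 1) g'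
        (a (t + h * r) - A h t) (A h t)
      rw [smul_eq_mul] at this
      simp_rw [mul_comm _ (a (t + h * r) - A h t)]
      rw [this, intervalIntegral.integral_eq_sub_of_hasDerivAt (fun y _ => hgd y)
        (hg'.intervalIntegrable _ _)]
      simp
    have e2 : ρ h t r = (∫ θ in (0:ℝ)..1, g' (A h t + θ * (a (t + h * r) - A h t)))
        - g' (A h t) := by
      rw [hρ]
      simp only
      rw [intervalIntegral.integral_sub]
      · simp
      · exact Continuous.intervalIntegrable (by fun_prop) _ _
      · exact Continuous.intervalIntegrable (by fun_prop) _ _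
    rw [e2]
    linarith
  -- main term
  have m1 : Tendsto (fun h => G (A h β) - G (A h α)) (𝓝[>] 0) (𝓝 (G (a β) - G (a α))) := by
    have : Continuous fun h => G (A h β) - G (A h α) := by fun_prop
    have := this.tendsto 0
    simp only [hA0] at this
    exact this.mono_left nhdsWithin_le_nhds
  -- error term
  have m2 : Tendsto (fun h => 2 * C * C * ∫ t in α..β, ∫ r in (0:ℝ)..1, |ρ h t r|) (𝓝[>] 0)
      (𝓝 0) := by
    have : Continuous fun h => 2 * C * C * ∫ t in α..β, ∫ r in (0:ℝ)..1, |ρ h t r| := by fun_prop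
    have := this.tendsto 0
    simp only [hρ0] at this
    simp at this
    exact this.mono_left nhdsWithin_le_nhds
  have m3 : ∀ᶠ h in 𝓝[>] (0:ℝ),
      |(∫ t in α..β, (∫ r in (0:ℝ)..1, g (a (t + h * r))) * ((a (t+h) - a t) / h)) -
        (G (A h β) - G (A h α))| ≤ 2 * C * C * ∫ t in α..β, ∫ r in (0:ℝ)..1, |ρ h t r| := by
    filter_upwards [Ioo_mem_nhdsGT hh0] with h hh
    have hne : h ≠ 0 := hh.1.ne'
    have e1 : G (A h β) - G (A h α) = ∫ t in α..β, g (A h t) * ((a (t+h) - a t) / h) := by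
      symm
      apply intervalIntegral.integral_eq_sub_of_hasDerivAt
      · intro t _
        exact (hGd (A h t)).comp t (avg_hasDeriv a ha h hne t)
      · exact Continuous.intervalIntegrable (by fun_prop) _ _
    have e2 : ∀ t, (∫ r in (0:ℝ)..1, g (a (t + h * r))) - g (A h t) =
        ∫ r in (0:ℝ)..1, (a (t + h * r) - A h t) * ρ h t r := by
      intro t
      simp_rw [hρe]
      rw [intervalIntegral.integral_add, intervalIntegral.integral_add,
        intervalIntegral.integral_const_mul, intervalIntegral.integral_sub]
      · simp [hA]
      all_goals exact Continuous.intervalIntegrable (by fun_prop) _ _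
    rw [e1, ← intervalIntegral.integral_sub]
    rotate_left
    · exact Continuous.intervalIntegrable (by fun_prop) _ _
    · exact Continuous.intervalIntegrable (by fun_prop) _ _
    rw [← intervalIntegral.integral_const_mul]
    apply intervalIntegral.abs_integral_le_integral_abs hαβ |>.trans
    apply intervalIntegral.integral_mono_on hαβ
    · exact Continuous.intervalIntegrable (by fun_prop) _ _
    · exact Continuous.intervalIntegrable (by fun_prop) _ _
    intro t ht
    rw [← sub_mul, abs_mul, e2]
    have sh : 0 < √h := Real.sqrt_pos.2 hh.1
    have b1 : |(a (t+h) - a t) / h| ≤ C / √h := by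
      rw [abs_div, abs_of_pos hh.1, div_le_div_iff₀ hh.1 sh]
      have := hC t ht h hh.1 hh.2
      calc |a (t+h) - a t| * √h ≤ C * √h * √h := by gcongr
        _ = C * h := by rw [mul_assoc, Real.mul_self_sqrt hh.1.le]
    have b0 : ∀ r ∈ Icc (0:ℝ) 1, |a (t + h * r) - a t| ≤ C * √h := by
      intro r hr
      rcases hr.1.eq_or_lt with h' | h'
      · rw [← h']; simp; positivity
      · have := hC t ht (h*r) (mul_pos hh.1 h') (by nlinarith [hr.2, hh.1, hh.2])
        refine this.trans ?_
        gcongr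
        nlinarith [hr.2, hh.1]
    have b2 : |A h t - a t| ≤ C * √h := by
      have : A h t - a t = ∫ r in (0:ℝ)..1, (a (t + h * r) - a t) := by
        rw [intervalIntegral.integral_sub]
        · simp [hA]
        all_goals exact Continuous.intervalIntegrable (by fun_prop) _ _
      rw [this]
      have := intervalIntegral.norm_integral_le_of_norm_le_const (a := (0:ℝ)) (b := 1)
        (f := fun r => a (t + h * r) - a t) (C := C * √h) (fun r hr => by
          rw [uIoc_of_le zero_le_one] at hr
          exact b0 r ⟨hr.1.le, hr.2⟩)
      simpa using this
    have b3 : |∫ r in (0:ℝ)..1, (a (t + h * r) - A h t) * ρ h t r| ≤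
        (2 * C * √h) * ∫ r in (0:ℝ)..1, |ρ h t r| := by
      rw [← intervalIntegral.integral_const_mul]
      apply intervalIntegral.abs_integral_le_integral_abs zero_le_one |>.trans
      apply intervalIntegral.integral_mono_on zero_le_one
      · exact Continuous.intervalIntegrable (by fun_prop) _ _
      · exact Continuous.intervalIntegrable (by fun_prop) _ _
      intro r hr
      rw [abs_mul]
      gcongr
      have := abs_sub_le (a (t + h * r)) (a t) (A h t)
      rw [abs_sub_comm (a t)] at this
      linarith [b0 r hr]
    have i0 : 0 ≤ ∫ r in (0:ℝ)..1, |ρ h t r| :=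
      intervalIntegral.integral_nonneg zero_le_one (fun _ _ => abs_nonneg _)
    calc _ ≤ ((2 * C * √h) * ∫ r in (0:ℝ)..1, |ρ h t r|) * (C / √h) := by gcongr
      _ = _ := by field_simp
  have m4 : Tendsto (fun h => (∫ t in α..β, (∫ r in (0:ℝ)..1, g (a (t + h * r))) * ((a (t+h) - a t) / h)) -
        (G (A h β) - G (A h α))) (𝓝[>] 0) (𝓝 0) := by
    refine squeeze_zero_norm' ?_ m2
    filter_upwards [m3] with h hh
    exact hh
  have := m4.add m1
  simpa using this

namespace AbsSol
variable {p : ℝ} {s ds : ℝ → ℝ} {v w : ℝ → ℝ → ℝ}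

lemma holder (H : AbsSol p s ds v w) (T : ℝ) : ∃ C h0 : ℝ, 0 ≤ C ∧ 0 < h0 ∧
    ∀ t ∈ Icc 1 T, ∀ k, 0 < k → k < h0 → |v (t + k) 0 - v t 0| ≤ C * √k := by
  have hv := H.v_cont
  have hw := H.w_cont
  have hcomp : IsCompact (Icc (1:ℝ) (T+1) ×ˢ Icc (0:ℝ) (s 1)) := isCompact_Icc.prod isCompact_Icc
  obtain ⟨K, hK⟩ := hcomp.exists_bound_of_continuousOn hw.continuousOn
  have hK' : ∀ t x, 1 ≤ t → t ≤ T + 1 → 0 ≤ x → x ≤ s 1 → |w t x| ≤ K := by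
    intro t x h1 h2 h3 h4
    exact hK (t, x) ⟨⟨h1, h2⟩, ⟨h3, h4⟩⟩
  refine ⟨4 * |K|, min 1 ((s 1)^2), by positivity, lt_min one_pos (pow_pos (H.s_pos 1) 2), ?_⟩
  intro t ht k hk hk1
  have hk2 := lt_of_lt_of_le hk1 (min_le_left _ _)
  have hk3 := lt_of_lt_of_le hk1 (min_le_right _ _)
  set l := √k with hl
  have hl0 : 0 < l := Real.sqrt_pos.2 hk
  have hll : l * l = k := Real.mul_self_sqrt hk.le
  have hls : l ≤ s 1 := by
    rw [hl]; exact (Real.sqrt_le_left (H.s_pos 1).le).2 hk3.le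
  have hst : l ≤ s t := hls.trans (H.s_mono ht.1)
  have hKK : ∀ t x, 1 ≤ t → t ≤ T + 1 → 0 ≤ x → x ≤ s 1 → |w t x| ≤ |K| :=
    fun t x a b c d => (hK' t x a b c d).trans (le_abs_self _)
  have c1 : ∀ t, 1 ≤ t → t ≤ T + 1 → ∀ y, 0 ≤ y → y ≤ l → |v t y - v t 0| ≤ |K| * l := by
    intro t h1 h2 y h3 h4
    rw [H.F1 t y h3 (h4.trans (hls.trans (H.s_mono h1)))]
    have := intervalIntegral.norm_integral_le_of_norm_le_const (a := (0:ℝ)) (b := y)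
        (f := w t) (C := |K|) (fun r hr => by
          rw [uIoc_of_le h3] at hr
          exact hKK t r h1 h2 hr.1.le (hr.2.trans (h4.trans hls)))
    rw [add_sub_cancel_left]
    refine this.trans ?_
    rw [sub_zero, abs_of_nonneg h3]
    gcongr
  have c2 := H.F2 t (t+k) l ht.1 (by linarith) hl0.le hst
  have c3 : |∫ τ in t..(t+k), (w τ l - w τ 0)| ≤ 2 * |K| * k := by
    have := intervalIntegral.norm_integral_le_of_norm_le_const (a := t) (b := t + k)
        (f := fun τ => w τ l - w τ 0) (C := 2 * |K|) (fun r hr => by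
          rw [uIoc_of_le (by linarith)] at hr
          have r1 : 1 ≤ r := ht.1.trans hr.1.le
          have r2 : r ≤ T + 1 := hr.2.trans (by linarith [ht.2])
          have q1 := hKK r l r1 r2 hl0.le hls
          have q2 := hKK r 0 r1 r2 le_rfl (H.s_pos 1).le
          rw [Real.norm_eq_abs]
          linarith [abs_sub (w r l) (w r 0)])
    simpa [abs_of_pos hk] using this
  have c4 : |∫ y in (0:ℝ)..l, ((v (t+k) y - v (t+k) 0) - (v t y - v t 0))| ≤ (2 * |K| * l) * l := by
    have := intervalIntegral.norm_integral_le_of_norm_le_const (a := (0:ℝ)) (b := l)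
        (f := fun y => (v (t+k) y - v (t+k) 0) - (v t y - v t 0)) (C := 2 * |K| * l) (fun r hr => by
          rw [uIoc_of_le hl0.le] at hr
          have q1 := c1 t ht.1 (by linarith [ht.2]) r hr.1.le hr.2
          have q2 := c1 (t+k) (by linarith [ht.1]) (by linarith [ht.2]) r hr.1.le hr.2
          rw [Real.norm_eq_abs]
          linarith [abs_sub (v (t+k) r - v (t+k) 0) (v t r - v t 0)])
    simpa [abs_of_pos hl0] using this
  have c5 : ∫ y in (0:ℝ)..l, ((v (t+k) y - v (t+k) 0) - (v t y - v t 0)) =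
      (∫ y in (0:ℝ)..l, (v (t+k) y - v t y)) - l * (v (t+k) 0 - v t 0) := by
    have : ∀ y, (v (t+k) y - v (t+k) 0) - (v t y - v t 0) =
      (v (t+k) y - v t y) - (v (t+k) 0 - v t 0) := by intro y; ring
    simp_rw [this]
    rw [intervalIntegral.integral_sub]
    · simp; ring
    all_goals exact Continuous.intervalIntegrable (by fun_prop) _ _
  rw [c5, c2] at c4
  have c6 : l * |v (t+k) 0 - v t 0| ≤ l * (4 * |K| * l) := by
    rw [← abs_of_pos hl0, ← abs_mul, abs_of_pos hl0]
    have hk' : 2 * |K| * k = 2 * |K| * l * l := by rw [← hll]; ring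
    rw [hk'] at c3
    rw [abs_le] at c3 c4 ⊢
    constructor <;> nlinarith [c3.1, c3.2, c4.1, c4.2]
  exact le_of_mul_le_mul_left c6 hl0

lemma Ds_eq (H : AbsSol p s ds v w) (h t : ℝ) (hh : 0 < h) (ht : 1 ≤ t) :
    Dq v h t (s t) = -((∫ r in (0:ℝ)..1, ds (t + h * r)) *
      ∫ r in (0:ℝ)..1, w (t + h) (s t + (s (t+h) - s t) * r)) := by
  have hv := H.v_cont
  have hw := H.w_cont
  have hm : s t ≤ s (t+h) := H.s_mono (by linarith)
  have e1 := H.F1 (t+h) (s t) (H.s_pos t).le hm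
  have e2 := H.F1 (t+h) (s (t+h)) (H.s_pos _).le le_rfl
  rw [H.bcs] at e2
  have e3 : ∫ y in (s t)..(s (t+h)), w (t+h) y =
      (∫ y in (0:ℝ)..(s (t+h)), w (t+h) y) - ∫ y in (0:ℝ)..(s t), w (t+h) y := by
    rw [intervalIntegral.integral_interval_sub_left] <;>
      exact Continuous.intervalIntegrable (by fun_prop) _ _
  have e4 := intervalIntegral.smul_integral_comp_add_mul (a := 0) (b := 1) (w (t+h))
        (s (t+h) - s t) (s t)
  rw [smul_eq_mul] at e4
  simp only [mul_zero, add_zero, mul_one, add_sub_cancel] at e4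
  have e5 := H.s_int t (t+h) ht (by linarith)
  rw [avg_eq ds t h hh.ne']
  have e6 : ∫ τ in t..(t+h), ds τ = s (t+h) - s t := by linarith
  unfold Dq
  rw [H.bcs, e6, mul_assoc, e4, e3]
  field_simp
  linarith

def En (p : ℝ) (s : ℝ → ℝ) (v w : ℝ → ℝ → ℝ) (t : ℝ) : ℝ :=
  1 / 2 * (∫ x in (0:ℝ)..s t, (w t x)^2) - v t 0 ^ (p+1) / (p+1)

lemma energy_lim (H : AbsSol p s ds v w) (hp : 1 < p) (α β : ℝ) (hα : 1 ≤ α) (hαβ : α ≤ β)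
    (ε : ℝ) (hε : 0 < ε) :
    ∀ᶠ h in 𝓝[>] (0:ℝ), ∫ t in α..β, ∫ x in (0:ℝ)..s t, (Dq v h t x)^2 ≤
      En p s v w α - En p s v w β + ε := by
  have hv := H.v_cont
  have hw := H.w_cont
  have hs := H.s_cont
  have hds := H.ds_cont
  have hW3 := St_cont3 w hw
  have hWu : ∀ f : ℝ × ℝ → ℝ, Continuous f →
      Continuous (Function.uncurry fun (h t : ℝ) => St w h t (f (h,t))) := by
    intro f hf
    exact hW3.comp (by fun_prop : Continuous fun q : ℝ × ℝ => (q.1, q.2, f (q.1, q.2)))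
  have hWs := hWu (fun q => s q.2) (by fun_prop)
  simp only at hWs
  -- boundary term at s
  set Ds : ℝ → ℝ → ℝ := fun h t => -((∫ r in (0:ℝ)..1, ds (t + h * r)) *
      ∫ r in (0:ℝ)..1, w (t + h) (s t + (s (t+h) - s t) * r)) with hDs
  have hDsc : Continuous (Function.uncurry Ds) := by rw [hDs]; fun_prop
  have t1 : Tendsto (fun h => ∫ t in α..β, (ds t * (St w h t (s t))^2
      + 2 * (St w h t (s t) * Ds h t))) (𝓝[>] 0) (𝓝 (∫ t in α..β, (ds t * (St w 0 t (s t))^2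
      + 2 * (St w 0 t (s t) * Ds 0 t)))) := by
    have : Continuous fun h => ∫ t in α..β, (ds t * (St w h t (s t))^2
      + 2 * (St w h t (s t) * Ds h t)) := by fun_prop
    exact (this.tendsto 0).mono_left nhdsWithin_le_nhds
  have t1' : (∫ t in α..β, (ds t * (St w 0 t (s t))^2
      + 2 * (St w 0 t (s t) * Ds 0 t))) ≤ 0 := by
    have : ∀ t, ds t * (St w 0 t (s t))^2 + 2 * (St w 0 t (s t) * Ds 0 t) = -(ds t)^3 := by
      intro t
      have : w t (s t) = -ds t := by linarith [H.stefan t]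
      simp [St_zero, hDs, this]
      ring
    simp_rw [this]
    rw [intervalIntegral.integral_neg, neg_nonpos]
    exact intervalIntegral.integral_nonneg hαβ (fun t _ => pow_nonneg (H.ds_nonneg t) 3)
  -- boundary term at 0
  obtain ⟨C, h0, hC0, hh0, hC⟩ := H.holder β
  have t2 := chain_half (fun t => v t 0) (by fun_prop) (fun x => x ^ p) (fun x => p * x ^ (p-1))
    (fun x => x ^ (p+1) / (p+1))
    (continuous_const.mul (Real.continuous_rpow_const (by linarith)))
    (fun x => Real.hasDerivAt_rpow_const (Or.inr hp.le))
    (fun x => by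
      have := (Real.hasDerivAt_rpow_const (x := x) (p := p+1) (Or.inr (by linarith))).div_const (p+1)
      refine this.congr_deriv ?_
      have : p + 1 ≠ 0 := by linarith
      field_simp
      simp)
    α β C h0 hαβ hh0 hC0 (fun t ht => hC t ⟨hα.trans ht.1, ht.2⟩)
  -- endpoint terms
  have t3 : ∀ T, Tendsto (fun h => ∫ x in (0:ℝ)..s T, (St w h T x)^2) (𝓝[>] 0)
      (𝓝 (∫ x in (0:ℝ)..s T, (w T x)^2)) := by
    intro T
    have hc : Continuous (Function.uncurry fun h x => St w h T x) :=
      hW3.comp (by fun_prop : Continuous fun q : ℝ × ℝ => (q.1, T, q.2))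
    have : Continuous (fun h => ∫ x in (0:ℝ)..s T, (St w h T x)^2) := by fun_prop
    have := (this.tendsto 0).mono_left (nhdsWithin_le_nhds (s := Ioi 0))
    simpa only [St_zero] using this
  have t4 := (((t1.const_mul (1/2)).add t2).sub ((t3 β).const_mul (1/2))).add ((t3 α).const_mul (1/2))
  have t5 := t4.eventually_le_const (u := En p s v w α - En p s v w β + ε) (by
    unfold En; linarith)
  filter_upwards [t5, self_mem_nhdsWithin] with h h5 hh
  have hh : 0 < h := hh
  have e := H.energy_h h α β hh hα hαβ
  have hW := St_cont w hw h
  have hD := Dq_cont v hv h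
  have hcD : Continuous fun t => ∫ x in (0:ℝ)..s t, (Dq v h t x)^2 := by
      apply intervalIntegral.continuous_parametric_intervalIntegral_of_continuous _ hs
      fun_prop
  rw [intervalIntegral.integral_sub, intervalIntegral.integral_sub,
    intervalIntegral.integral_const_mul, intervalIntegral.integral_const_mul] at e
  rotate_left
  all_goals try exact Continuous.intervalIntegrable (by fun_prop) _ _
  have e1 : ∫ t in α..β, (ds t * (St w h t (s t))^2 + 2 * (St w h t (s t) * Dq v h t (s t))) =
      ∫ t in α..β, (ds t * (St w h t (s t))^2 + 2 * (St w h t (s t) * Ds h t)) := by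
    apply intervalIntegral.integral_congr
    intro t ht
    rw [uIcc_of_le hαβ] at ht
    simp only
    rw [H.Ds_eq h t hh (hα.trans ht.1)]
  have e2 : ∫ t in α..β, St w h t 0 * Dq v h t 0 =
      -∫ t in α..β, (∫ r in (0:ℝ)..1, (v (t + h * r) 0)^p) * ((v (t+h) 0 - v t 0) / h) := by
    rw [← intervalIntegral.integral_neg]
    apply intervalIntegral.integral_congr
    intro t ht
    simp only [St, Dq, H.bc0, intervalIntegral.integral_neg]
    ring
  rw [e1, e2] at e
  linarith

end AbsSol

namespace AbsSol
variable {p : ℝ} {s ds : ℝ → ℝ} {v w : ℝ → ℝ → ℝ}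

lemma En_anti (H : AbsSol p s ds v w) (hp : 1 < p) (α β : ℝ) (hα : 1 ≤ α) (hαβ : α ≤ β) :
    En p s v w β ≤ En p s v w α := by
  by_contra hcon
  push Not at hcon
  obtain ⟨h, hh⟩ := (H.energy_lim hp α β hα hαβ ((En p s v w β - En p s v w α)/2)
    (by linarith)).exists
  have : 0 ≤ ∫ t in α..β, ∫ x in (0:ℝ)..s t, (Dq v h t x)^2 :=
    intervalIntegral.integral_nonneg hαβ (fun t _ =>
      intervalIntegral.integral_nonneg (H.s_pos t).le (fun x _ => sq_nonneg _))
  linarith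

lemma Kest (H : AbsSol p s ds v w) (hp : 1 < p) (α β : ℝ) (hα : 1 ≤ α) (hαβ : α ≤ β)
    (X : ℝ → ℝ) (hX : Continuous X) (xb : ℝ) (hxb : 0 ≤ xb)
    (h1 : ∀ t ∈ Icc α β, 0 ≤ X t ∧ X t ≤ s t ∧ X t ≤ xb) :
    ∫ t in α..β, (w t (X t) - w t 0)^2 ≤ xb * (En p s v w α - En p s v w β) := by
  have hv := H.v_cont
  have hw := H.w_cont
  have hs := H.s_cont
  have hW3 := St_cont3 w hw
  have hWu : ∀ f : ℝ × ℝ → ℝ, Continuous f →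
      Continuous (Function.uncurry fun (h t : ℝ) => St w h t (f (h,t))) := by
    intro f hf
    exact hW3.comp (by fun_prop : Continuous fun q : ℝ × ℝ => (q.1, q.2, f (q.1, q.2)))
  have hWX := hWu (fun q => X q.2) (by fun_prop)
  have hW0 := hWu (fun q => 0) (by fun_prop)
  simp only at hWX hW0
  have t1 : Tendsto (fun h => ∫ t in α..β, (St w h t (X t) - St w h t 0)^2) (𝓝[>] 0)
      (𝓝 (∫ t in α..β, (w t (X t) - w t 0)^2)) := by
    have : Continuous fun h => ∫ t in α..β, (St w h t (X t) - St w h t 0)^2 := by fun_prop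
    have := (this.tendsto 0).mono_left (nhdsWithin_le_nhds (s := Ioi 0))
    simpa only [St_zero] using this
  apply le_of_forall_pos_le_add
  intro ε hε
  have hε' : 0 < ε / (xb + 1) := by positivity
  refine le_of_tendsto t1 ?_
  filter_upwards [H.energy_lim hp α β hα hαβ _ hε', self_mem_nhdsWithin] with h h2 hh
  have hh : 0 < h := hh
  have hD := Dq_cont v hv h
  have hcD : Continuous fun t => ∫ x in (0:ℝ)..s t, (Dq v h t x)^2 := by
      apply intervalIntegral.continuous_parametric_intervalIntegral_of_continuous _ hs
      fun_prop
  have e1 : ∫ t in α..β, (St w h t (X t) - St w h t 0)^2 ≤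
      ∫ t in α..β, xb * ∫ x in (0:ℝ)..s t, (Dq v h t x)^2 := by
    apply intervalIntegral.integral_mono_on hαβ
    · exact Continuous.intervalIntegrable (by fun_prop) _ _
    · exact Continuous.intervalIntegrable (by fun_prop) _ _
    intro t ht
    obtain ⟨a1, a2, a3⟩ := h1 t ht
    rw [H.StW_x h t (X t) hh (hα.trans ht.1) ⟨a1, a2⟩, add_sub_cancel_left]
    refine (cs_int _ (by fun_prop) 0 (X t) a1).trans ?_
    rw [sub_zero]
    have i0 : 0 ≤ ∫ x in (0:ℝ)..X t, (Dq v h t x)^2 :=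
      intervalIntegral.integral_nonneg a1 (fun x _ => sq_nonneg _)
    have i1 : ∫ x in (0:ℝ)..X t, (Dq v h t x)^2 ≤ ∫ x in (0:ℝ)..s t, (Dq v h t x)^2 := by
      apply intervalIntegral.integral_mono_interval le_rfl a1 a2
      · exact Eventually.of_forall fun x => sq_nonneg _
      · exact Continuous.intervalIntegrable (by fun_prop) _ _
    gcongr
  rw [intervalIntegral.integral_const_mul] at e1
  refine e1.trans ?_
  have : xb * (ε / (xb + 1)) ≤ ε := by
    rw [mul_div_assoc', div_le_iff₀ (by positivity)]
    nlinarith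
  nlinarith [mul_le_mul_of_nonneg_left h2 hxb]

def Mf (s : ℝ → ℝ) (v : ℝ → ℝ → ℝ) (t : ℝ) : ℝ := ∫ x in (0:ℝ)..s t, (v t x)^2
def gf (p : ℝ) (s : ℝ → ℝ) (v w : ℝ → ℝ → ℝ) (t : ℝ) : ℝ :=
  2 * (v t 0 * (v t 0)^p - ∫ x in (0:ℝ)..s t, (w t x)^2)

lemma Mf_cont (H : AbsSol p s ds v w) : Continuous (Mf s v) := by
  have hv := H.v_cont
  unfold Mf
  apply intervalIntegral.continuous_parametric_intervalIntegral_of_continuous _ H.s_cont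
  fun_prop

lemma gf_cont (H : AbsSol p s ds v w) (hp : 1 < p) : Continuous (gf p s v w) := by
  have hv := H.v_cont
  have hw := H.w_cont
  have h1 : Continuous fun t => ∫ x in (0:ℝ)..s t, (w t x)^2 := by
    apply intervalIntegral.continuous_parametric_intervalIntegral_of_continuous _ H.s_cont
    fun_prop
  have h2 : Continuous fun t => v t 0 ^ p :=
    (Real.continuous_rpow_const (by linarith)).comp (by fun_prop : Continuous fun t => v t 0)
  unfold gf
  fun_prop

/-- common continuity in h of integrals over the moving domain -/
lemma St_int_cont (H : AbsSol p s ds v w) (f : ℝ → ℝ → ℝ) (hf : Continuous (Function.uncurry f)) :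
    Continuous (Function.uncurry fun h t => ∫ x in (0:ℝ)..s t, (St f h t x)^2) := by
  have hs := H.s_cont
  have hW3 := St_cont3 f hf
  have hc : Continuous (fun q : (ℝ × ℝ) × ℝ => St f q.1.1 q.1.2 q.2) :=
      hW3.comp (by fun_prop : Continuous fun q : (ℝ × ℝ) × ℝ => (q.1.1, q.1.2, q.2))
  have := intervalIntegral.continuous_parametric_intervalIntegral_of_continuous
    (μ := volume) (a₀ := 0)
    (f := fun q : ℝ × ℝ => fun x => (St f q.1 q.2 x)^2) (s := fun q => s q.2)
    (by exact hc.pow 2) (by fun_prop)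
  exact this

lemma M_diff (H : AbsSol p s ds v w) (α β : ℝ) (hα : 1 ≤ α) (hαβ : α ≤ β) :
    Mf s v β - Mf s v α = ∫ t in α..β, gf p s v w t := by
  have hv := H.v_cont
  have hw := H.w_cont
  have hs := H.s_cont
  have hds := H.ds_cont
  have u1 := H.St_int_cont v hv
  have uT : ∀ T, Continuous fun h => ∫ x in (0:ℝ)..s T, (St v h T x)^2 := fun T =>
    u1.comp (by fun_prop : Continuous fun h : ℝ => (h, T))
  have uα := uT α
  have uβ := uT β
  have u2 := H.St_int_cont w hw
  have hu : ∀ g : ℝ → ℝ → ℝ, Continuous (Function.uncurry g) → ∀ f : ℝ × ℝ → ℝ, Continuous f →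
      Continuous (Function.uncurry fun (h t : ℝ) => St g h t (f (h,t))) := by
    intro g hg f hf
    exact (St_cont3 g hg).comp (by fun_prop : Continuous fun q : ℝ × ℝ => (q.1, q.2, f (q.1, q.2)))
  have c1 := hu w hw (fun q => s q.2) (by fun_prop)
  have c2 := hu v hv (fun q => s q.2) (by fun_prop)
  have c3 := hu w hw (fun q => 0) (by fun_prop)
  have c4 := hu v hv (fun q => 0) (by fun_prop)
  simp only at c1 c2 c3 c4
  have L : Continuous fun h => (∫ x in (0:ℝ)..s β, (St v h β x)^2)
      - (∫ x in (0:ℝ)..s α, (St v h α x)^2) := by fun_prop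
  have R : Continuous fun h => ∫ t in α..β, (ds t * (St v h t (s t))^2
        + 2 * (St v h t (s t) * St w h t (s t) - St v h t 0 * St w h t 0
        - ∫ x in (0:ℝ)..s t, (St w h t x)^2)) := by fun_prop
  have L' := (L.tendsto 0).mono_left (nhdsWithin_le_nhds (s := Ioi 0))
  have R' := (R.tendsto 0).mono_left (nhdsWithin_le_nhds (s := Ioi 0))
  have key := tendsto_nhds_unique (L'.congr' (f₂ := fun h => ∫ t in α..β, (ds t * (St v h t (s t))^2
        + 2 * (St v h t (s t) * St w h t (s t) - St v h t 0 * St w h t 0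
        - ∫ x in (0:ℝ)..s t, (St w h t x)^2))) (by
      filter_upwards [self_mem_nhdsWithin] with h hh
      have hh : 0 < h := hh
      rw [H.L2_h h α β hh hα hαβ]
      apply intervalIntegral.integral_congr
      intro t ht
      rw [uIcc_of_le hαβ] at ht
      simp only
      rw [H.VD_parts h t hh (hα.trans ht.1)])) R'
  simp only [St_zero, H.bcs, H.bc0] at key
  unfold Mf gf
  rw [key]
  congr 1
  funext t
  ring

lemma M_le (H : AbsSol p s ds v w) (hp : 1 < p) (α β : ℝ) (hα : 1 ≤ α) (hαβ : α ≤ β)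
    (l : ℝ) (hl : 0 < l) :
    Mf s v β - Mf s v α ≤ l * (∫ t in α..β, Mf s v t) + (En p s v w α - En p s v w β) / l := by
  have hv := H.v_cont
  have hw := H.w_cont
  have hs := H.s_cont
  have hds := H.ds_cont
  have u1 := H.St_int_cont v hv
  have uT : ∀ T, Continuous fun h => ∫ x in (0:ℝ)..s T, (St v h T x)^2 := fun T =>
    u1.comp (by fun_prop : Continuous fun h : ℝ => (h, T))
  have uα := uT α
  have uβ := uT β
  have hu : ∀ g : ℝ → ℝ → ℝ, Continuous (Function.uncurry g) → ∀ f : ℝ × ℝ → ℝ, Continuous f →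
      Continuous (Function.uncurry fun (h t : ℝ) => St g h t (f (h,t))) := by
    intro g hg f hf
    exact (St_cont3 g hg).comp (by fun_prop : Continuous fun q : ℝ × ℝ => (q.1, q.2, f (q.1, q.2)))
  have c2 := hu v hv (fun q => s q.2) (by fun_prop)
  simp only at c2
  have L : Continuous fun h => (∫ x in (0:ℝ)..s β, (St v h β x)^2)
      - (∫ x in (0:ℝ)..s α, (St v h α x)^2) - (∫ t in α..β, ds t * (St v h t (s t))^2)
      - l * ∫ t in α..β, ∫ x in (0:ℝ)..s t, (St v h t x)^2 := by fun_prop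
  have L' := (L.tendsto 0).mono_left (nhdsWithin_le_nhds (s := Ioi 0))
  simp only [St_zero, H.bcs] at L'
  apply le_of_forall_pos_le_add
  intro ε hε
  have hfin := le_of_tendsto (b := (En p s v w α - En p s v w β) / l + ε) L' (by
    filter_upwards [H.energy_lim hp α β hα hαβ (l * ε) (by positivity), self_mem_nhdsWithin]
      with h h2 hh
    have hh : 0 < h := hh
    have hD := Dq_cont v hv h
    have hV := St_cont v hv h
    have hcD : Continuous fun t => ∫ x in (0:ℝ)..s t, (Dq v h t x)^2 := by
      apply intervalIntegral.continuous_parametric_intervalIntegral_of_continuous _ hs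
      fun_prop
    have hcV : Continuous fun t => ∫ x in (0:ℝ)..s t, (St v h t x)^2 := by
      apply intervalIntegral.continuous_parametric_intervalIntegral_of_continuous _ hs
      fun_prop
    have hcVD : Continuous fun t => ∫ x in (0:ℝ)..s t, St v h t x * Dq v h t x := by
      apply intervalIntegral.continuous_parametric_intervalIntegral_of_continuous _ hs
      fun_prop
    rw [H.L2_h h α β hh hα hαβ, intervalIntegral.integral_add]
    rotate_left
    · exact Continuous.intervalIntegrable (by fun_prop) _ _
    · exact Continuous.intervalIntegrable (by fun_prop) _ _
    have e : ∫ t in α..β, 2 * ∫ x in (0:ℝ)..s t, St v h t x * Dq v h t x ≤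
        ∫ t in α..β, (l * (∫ x in (0:ℝ)..s t, (St v h t x)^2)
          + l⁻¹ * ∫ x in (0:ℝ)..s t, (Dq v h t x)^2) := by
      apply intervalIntegral.integral_mono_on hαβ
      · exact Continuous.intervalIntegrable (by fun_prop) _ _
      · exact Continuous.intervalIntegrable (by fun_prop) _ _
      intro t ht
      rw [← intervalIntegral.integral_const_mul, ← intervalIntegral.integral_const_mul,
        ← intervalIntegral.integral_const_mul, ← intervalIntegral.integral_add]
      rotate_left
      · exact Continuous.intervalIntegrable (by fun_prop) _ _
      · exact Continuous.intervalIntegrable (by fun_prop) _ _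
      apply intervalIntegral.integral_mono_on (H.s_pos t).le
      · exact Continuous.intervalIntegrable (by fun_prop) _ _
      · exact Continuous.intervalIntegrable (by fun_prop) _ _
      intro x hx
      have : 0 ≤ l⁻¹ * (l * St v h t x - Dq v h t x)^2 := by positivity
      have e : l⁻¹ * (l * St v h t x - Dq v h t x)^2 =
        l * (St v h t x)^2 + l⁻¹ * (Dq v h t x)^2 - 2 * (St v h t x * Dq v h t x) := by
        field_simp; ring
      linarith
    rw [intervalIntegral.integral_add, intervalIntegral.integral_const_mul (2:ℝ),
      intervalIntegral.integral_const_mul l, intervalIntegral.integral_const_mul (l⁻¹)] at e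
    rotate_left
    · exact Continuous.intervalIntegrable (by fun_prop) _ _
    · exact Continuous.intervalIntegrable (by fun_prop) _ _
    have h3 : l⁻¹ * (∫ t in α..β, ∫ x in (0:ℝ)..s t, (Dq v h t x)^2) ≤
      (En p s v w α - En p s v w β) / l + ε := by
      rw [inv_mul_le_iff₀ hl]
      refine h2.trans (le_of_eq ?_)
      field_simp
    rw [intervalIntegral.integral_const_mul (2:ℝ)]
    linarith)
  unfold Mf
  simp at hfin
  linarith

end AbsSol

lemma ode_blow (Φ M g : ℝ → ℝ) (t0 k : ℝ) (hk : 0 < k)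
    (hΦ : ∀ t, t0 ≤ t → HasDerivAt Φ (M t) t) (hM : ∀ t, t0 ≤ t → HasDerivAt M (g t) t)
    (hΦp : ∀ t, t0 ≤ t → 0 < Φ t) (hMp : ∀ t, t0 ≤ t → 0 < M t)
    (hg : ∀ t, t0 ≤ t → (1 + k) * (M t)^2 ≤ g t * Φ t) : False := by
  set R : ℝ → ℝ := fun t => M t * (Φ t) ^ (-(1+k)) with hR
  have dR : ∀ t, t0 ≤ t → HasDerivAt R (g t * (Φ t) ^ (-(1+k)) +
      M t * (M t * (-(1+k)) * (Φ t)^(-(1+k) - 1))) t := by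
    intro t ht
    exact (hM t ht).mul ((hΦ t ht).rpow_const (Or.inl (hΦp t ht).ne'))
  have mR : MonotoneOn R (Ici t0) := by
    apply monotoneOn_of_deriv_nonneg (convex_Ici t0)
    · exact fun t ht => (dR t ht).continuousAt.continuousWithinAt
    · intro t ht
      rw [interior_Ici] at ht
      exact (dR t (le_of_lt ht)).differentiableAt.differentiableWithinAt
    · intro t ht
      rw [interior_Ici] at ht
      have ht : t0 ≤ t := le_of_lt ht
      rw [(dR t ht).deriv, Real.rpow_sub_one (hΦp t ht).ne']
      have h1 : 0 < (Φ t) ^ (-(1+k)) := Real.rpow_pos_of_pos (hΦp t ht) _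
      have h2 := hg t ht
      have e : g t * (Φ t) ^ (-(1+k)) + M t * (M t * (-(1+k)) * ((Φ t)^(-(1+k)) / Φ t)) =
        (Φ t)^(-(1+k)) / Φ t * (g t * Φ t - (1+k) * (M t)^2) := by
        have := (hΦp t ht).ne'
        field_simp
        ring
      rw [e]
      have := hΦp t ht
      apply mul_nonneg (by positivity) (by linarith)
  have hR0 : 0 < R t0 := mul_pos (hMp t0 le_rfl) (Real.rpow_pos_of_pos (hΦp t0 le_rfl) _)
  set Q : ℝ → ℝ := fun t => - (Φ t) ^ (-k) - k * R t0 * t with hQ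
  have dQ : ∀ t, t0 ≤ t → HasDerivAt Q (-(M t * (-k) * (Φ t)^(-k - 1)) - k * R t0) t := by
    intro t ht
    have := ((hΦ t ht).rpow_const (p := -k) (Or.inl (hΦp t ht).ne')).neg.sub
      ((hasDerivAt_id t).const_mul (k * R t0))
    refine this.congr_deriv ?_
    ring
  have mQ : MonotoneOn Q (Ici t0) := by
    apply monotoneOn_of_deriv_nonneg (convex_Ici t0)
    · exact fun t ht => (dQ t ht).continuousAt.continuousWithinAt
    · intro t ht
      rw [interior_Ici] at ht
      exact (dQ t (le_of_lt ht)).differentiableAt.differentiableWithinAt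
    · intro t ht
      rw [interior_Ici] at ht
      have ht : t0 ≤ t := le_of_lt ht
      rw [(dQ t ht).deriv]
      have := mR (self_mem_Ici (a := t0)) ht ht
      have e : -(M t * (-k) * (Φ t)^(-k - 1)) = k * R t := by
        simp only [hR]
        rw [show -k - 1 = -(1+k) by ring]; ring
      rw [e]
      nlinarith
  set T := t0 + ((Φ t0)^(-k)) / (k * R t0) with hT
  have hp0 : 0 < (Φ t0)^(-k) := Real.rpow_pos_of_pos (hΦp t0 le_rfl) _
  have hTt : t0 ≤ T := by rw [hT]; have : 0 < k * R t0 := by positivity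
                          have : 0 < ((Φ t0)^(-k)) / (k * R t0) := by positivity
                          linarith
  have h1 := mQ (self_mem_Ici (a := t0)) hTt hTt
  have hpT : 0 < (Φ T)^(-k) := Real.rpow_pos_of_pos (hΦp T hTt) _
  simp only [hQ] at h1
  have h2 : k * R t0 * T = k * R t0 * t0 + (Φ t0)^(-k) := by
    rw [hT]; field_simp
  linarith

namespace AbsSol
variable {p : ℝ} {s ds : ℝ → ℝ} {v w : ℝ → ℝ → ℝ}

lemma M_sq (H : AbsSol p s ds v w) (hp : 1 < p) (α β : ℝ) (hα : 1 ≤ α) (hαβ : α ≤ β)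
    (hd : 0 < Mf s v β - Mf s v α) (hA : 0 < ∫ t in α..β, Mf s v t) :
    (Mf s v β - Mf s v α)^2 ≤ 4 * (∫ t in α..β, Mf s v t) * (En p s v w α - En p s v w β) := by
  set d := Mf s v β - Mf s v α
  set A := ∫ t in α..β, Mf s v t
  have := H.M_le hp α β hα hαβ (d / (2 * A)) (by positivity)
  change d ≤ d / (2 * A) * A + _ at this
  set N := En p s v w α - En p s v w β
  have e : d / (2 * A) * A + N / (d / (2 * A)) = d / 2 + 2 * A * N / d := by
    field_simp
  rw [e] at this
  have h2 : d / 2 ≤ 2 * A * N / d := by linarith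
  rw [le_div_iff₀ hd] at h2
  nlinarith

lemma En_nonneg (H : AbsSol p s ds v w) (hp : 1 < p) (α : ℝ) (hα : 1 ≤ α) :
    0 ≤ En p s v w α := by
  by_contra hneg
  push Not at hneg
  set e := -En p s v w α with he
  have he0 : 0 < e := by linarith
  have hMc := H.Mf_cont
  have hgc := H.gf_cont hp
  have g1 : ∀ t, α ≤ t → 2 * (p+1) * (e + (En p s v w α - En p s v w t)) ≤ gf p s v w t := by
    intro t ht
    have i0 : 0 ≤ ∫ x in (0:ℝ)..s t, (w t x)^2 :=
      intervalIntegral.integral_nonneg (H.s_pos t).le (fun _ _ => sq_nonneg _)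
    have : v t 0 * v t 0 ^ p = v t 0 ^ (p+1) := by
      rw [Real.rpow_add_one' (H.v_nonneg t 0) (by linarith)]; ring
    have e2 : (p+1) * (v t 0 ^ (p+1) / (p+1)) = v t 0 ^ (p+1) := by
      have : p + 1 ≠ 0 := by linarith
      field_simp
    unfold gf
    rw [this, he]
    have : En p s v w t = 1 / 2 * (∫ x in (0:ℝ)..s t, (w t x)^2) - v t 0 ^ (p+1) / (p+1) := rfl
    rw [this]
    nlinarith
  have g2 : ∀ t, α ≤ t → 2 * (p+1) * e ≤ gf p s v w t := by
    intro t ht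
    have := H.En_anti hp α t hα ht
    nlinarith [g1 t ht]
  have M0 : ∀ t, 0 ≤ Mf s v t := fun t =>
    intervalIntegral.integral_nonneg (H.s_pos t).le (fun _ _ => sq_nonneg _)
  have M1 : ∀ t, α ≤ t → Mf s v α + 2 * (p+1) * e * (t - α) ≤ Mf s v t := by
    intro t ht
    have h1 := H.M_diff α t hα ht
    have h2 : ∫ τ in α..t, (2 * (p+1) * e) ≤ ∫ τ in α..t, gf p s v w τ := by
      apply intervalIntegral.integral_mono_on ht
      · exact Continuous.intervalIntegrable (by fun_prop) _ _
      · exact Continuous.intervalIntegrable (by fun_prop) _ _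
      intro τ hτ
      exact g2 τ hτ.1
    simp at h2
    linarith
  set k := (p-1)/4 with hk
  have hk0 : 0 < k := by rw [hk]; linarith
  set c := 2 * (p+1) * e with hc
  have hc0 : 0 < c := by have : 0 < p + 1 := by linarith
                         positivity
  -- choose B with M ≥ B implies
  set B := 2 * (1 + 2*k) * Mf s v α / k with hB
  have hB0 : 0 ≤ B := by have := M0 α; positivity
  set t0 := α + 1 + B / c with ht0
  have ht0α : α + 1 ≤ t0 := by have : 0 ≤ B / c := by positivity
                               linarith
  have Mt0 : ∀ t, t0 ≤ t → B ≤ Mf s v t ∧ 0 < Mf s v t - Mf s v α := by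
    intro t ht
    have h1 := M1 t (by linarith)
    have h2 : B / c + 1 ≤ t - α := by linarith
    have h3 : c * (B / c + 1) = B + c := by field_simp
    have h4 := mul_le_mul_of_nonneg_left h2 hc0.le
    have := M0 α
    constructor <;> linarith
  have hΦp : ∀ t, t0 ≤ t → 0 < ∫ τ in α..t, Mf s v τ := by
    intro t ht
    have h2 : ∫ τ in α..t, (c * (τ - α)) ≤ ∫ τ in α..t, Mf s v τ := by
      apply intervalIntegral.integral_mono_on (by linarith)
      · exact Continuous.intervalIntegrable (by fun_prop) _ _
      · exact Continuous.intervalIntegrable (by fun_prop) _ _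
      intro τ hτ
      linarith [M1 τ hτ.1, M0 α]
    have h3 : ∫ τ in α..t, (c * (τ - α)) = c * ((t-α)^2 / 2) := by
      rw [intervalIntegral.integral_const_mul]
      rw [intervalIntegral.integral_comp_sub_right (fun x => x)]
      simp
    rw [h3] at h2
    have : 0 < t - α := by linarith
    have : 0 < c * ((t-α)^2 / 2) := by positivity
    linarith
  refine ode_blow (fun t => ∫ τ in α..t, Mf s v τ) (Mf s v) (gf p s v w) t0 k hk0 ?_ ?_ hΦp ?_ ?_
  · intro t ht
    exact (hMc.integral_hasStrictDerivAt α t).hasDerivAt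
  · intro t ht
    have h1 : HasDerivAt (fun t => Mf s v α + ∫ τ in α..t, gf p s v w τ) (gf p s v w t) t :=
      (hgc.integral_hasStrictDerivAt α t).hasDerivAt.const_add _
    refine h1.congr_of_eventuallyEq ?_
    filter_upwards [Ioi_mem_nhds (by linarith : α < t)] with y hy
    linarith [H.M_diff α y hα (le_of_lt hy)]
  · intro t ht
    linarith [(Mt0 t ht).2, M0 α]
  · intro t ht
    have hαt : α ≤ t := by linarith
    have h1 := H.M_sq hp α t hα hαt (Mt0 t ht).2 (hΦp t ht)
    have h2 := g1 t hαt
    have h3 := hΦp t ht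
    set A := ∫ τ in α..t, Mf s v τ
    set N := En p s v w α - En p s v w t
    set m := Mf s v t
    set m0 := Mf s v α
    have hm0 : 0 ≤ m0 := M0 α
    obtain ⟨h4, h5⟩ := Mt0 t ht
    change B ≤ m at h4
    change 0 < m - m0 at h5
    have h6 : 2 * (1 + 2*k) * m0 ≤ k * m := by
      rw [hB, div_le_iff₀ hk0] at h4
      linarith
    have h7 : (1+k) * m^2 ≤ (1+2*k) * (m - m0)^2 := by
      nlinarith [mul_nonneg hm0 hm0, mul_le_mul_of_nonneg_left h6 (by linarith : 0 ≤ m)]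
    have hp4 : p + 1 = 2 * (1 + 2*k) := by rw [hk]; ring
    have h8 : 2 * (p+1) * N ≤ gf p s v w t := by nlinarith
    have h9 := mul_le_mul_of_nonneg_right h8 h3.le
    rw [hp4] at h9
    have h10 : (1+2*k) * (m - m0)^2 ≤ (1+2*k) * (4 * A * N) :=
      mul_le_mul_of_nonneg_left h1 (by linarith)
    linarith

end AbsSol

lemma mono_small (f : ℝ → ℝ) (hf : ∀ a b, 1 ≤ a → a ≤ b → f a ≤ f b) (B : ℝ)
    (hB : ∀ a, 1 ≤ a → f a ≤ B) (η : ℝ) (hη : 0 < η) :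
    ∃ T, 1 ≤ T ∧ ∀ a b, T ≤ a → a ≤ b → f b - f a ≤ η := by
  have hbdd : BddAbove (f '' Ici 1) := ⟨B, by rintro _ ⟨a, ha, rfl⟩; exact hB a ha⟩
  have hne : (f '' Ici 1).Nonempty := ⟨f 1, 1, self_mem_Ici, rfl⟩
  obtain ⟨_, ⟨T, hT, rfl⟩, h⟩ := exists_lt_of_lt_csSup hne (sub_lt_self (sSup (f '' Ici 1)) hη)
  refine ⟨T, hT, fun a b h1 h2 => ?_⟩
  have hT : 1 ≤ T := hT
  have e1 := hf T a hT h1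
  have e2 : f b ≤ sSup (f '' Ici 1) := le_csSup hbdd ⟨b, (hT.trans h1).trans h2, rfl⟩
  linarith

namespace AbsSol
variable {p : ℝ} {s ds : ℝ → ℝ} {v w : ℝ → ℝ → ℝ}

lemma En_small (H : AbsSol p s ds v w) (hp : 1 < p) (η : ℝ) (hη : 0 < η) :
    ∃ T, 1 ≤ T ∧ ∀ a b, T ≤ a → a ≤ b → En p s v w a - En p s v w b ≤ η := by
  obtain ⟨T, h1, h2⟩ := mono_small (fun t => -En p s v w t)
    (fun a b h1 h2 => neg_le_neg (H.En_anti hp a b h1 h2)) 0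
    (fun a h => neg_nonpos.2 (H.En_nonneg hp a h)) η hη
  exact ⟨T, h1, fun a b h3 h4 => by have := h2 a b h3 h4; linarith⟩

/-- L¹ version of Kest -/
lemma Kest1 (H : AbsSol p s ds v w) (hp : 1 < p) (α β : ℝ) (hα : 1 ≤ α) (hαβ : α ≤ β)
    (h1β : β ≤ α + 1)
    (X : ℝ → ℝ) (hX : Continuous X) (xb : ℝ) (hxb : 0 ≤ xb)
    (h1 : ∀ t ∈ Icc α β, 0 ≤ X t ∧ X t ≤ s t ∧ X t ≤ xb) (δ : ℝ) (hδ : 0 ≤ δ)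
    (hN : xb * (En p s v w α - En p s v w β) ≤ δ^2) :
    |∫ t in α..β, (w t (X t) - w t 0)| ≤ δ := by
  have hw := H.w_cont
  apply abs_le_of_sq_le_sq _ hδ
  have e1 := cs_int (fun t => w t (X t) - w t 0) (by fun_prop) α β hαβ
  have e2 := H.Kest hp α β hα hαβ X hX xb hxb h1
  have e3 : 0 ≤ ∫ t in α..β, (w t (X t) - w t 0)^2 :=
    intervalIntegral.integral_nonneg hαβ (fun _ _ => sq_nonneg _)
  nlinarith

lemma window (H : AbsSol p s ds v w) (hp : 1 < p) (ε : ℝ) (hε : 0 < ε) :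
    ∃ T, 1 ≤ T ∧ ∀ t, T ≤ t → ∃ r ∈ Icc t (t+1), v r 0 < ε := by
  have hv := H.v_cont
  have hw := H.w_cont
  have hs := H.s_cont
  have hap : Continuous fun t => v t 0 ^ p :=
    (Real.continuous_rpow_const (by linarith)).comp (by fun_prop : Continuous fun t => v t 0)
  have hεp : 0 < ε ^ p := Real.rpow_pos_of_pos hε p
  by_cases hun : ∀ x, ∃ t, 1 ≤ t ∧ x ≤ s t
  · set x := 2 * (ε / ε ^ p) with hx
    have hx0 : 0 < x := by positivity
    obtain ⟨T1, hT1, hT1s⟩ := hun x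
    obtain ⟨T2, hT2, hT2s⟩ := H.En_small hp ((ε / (2*x))^2 / x) (by positivity)
    refine ⟨max T1 T2, hT1.trans (le_max_left _ _), fun t ht => ?_⟩
    have ht1 : T1 ≤ t := (le_max_left _ _).trans ht
    have ht2 : T2 ≤ t := (le_max_right _ _).trans ht
    have h1t : 1 ≤ t := hT1.trans ht1
    by_contra hcon
    push Not at hcon
    have htt : t ≤ t + 1 := by linarith
    have N := hT2s t (t+1) ht2 htt
    have hJ : ∀ y ∈ Icc 0 x, |∫ r in t..(t+1), (w r y - w r 0)| ≤ ε / (2*x) := by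
      intro y hy
      apply H.Kest1 hp t (t+1) h1t htt le_rfl (fun _ => y) continuous_const x hx0.le
      · intro r hr
        refine ⟨hy.1, hy.2.trans (hT1s.trans (H.s_mono (ht1.trans hr.1))), hy.2⟩
      · positivity
      · calc _ ≤ x * ((ε / (2*x))^2 / x) := by gcongr
          _ = _ := by field_simp
    have e1 : ∀ r ∈ Icc t (t+1), v r 0 ≤ ∫ y in (0:ℝ)..x, (w r y - w r 0) := by
      intro r hr
      have f1 := H.F1 r x hx0.le (hT1s.trans (H.s_mono (ht1.trans hr.1)))
      have f2 := H.v_nonneg r x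
      have f3 : ∫ y in (0:ℝ)..x, (w r y - w r 0) = (∫ y in (0:ℝ)..x, w r y) + x * v r 0 ^ p := by
        rw [intervalIntegral.integral_sub]
        · simp [H.bc0]
        all_goals exact Continuous.intervalIntegrable (by fun_prop) _ _
      have f4 : 2 * v r 0 ≤ x * v r 0 ^ p := by
        have ha := hcon r hr
        have ha0 : 0 < v r 0 := hε.trans_le ha
        have : v r 0 * ε ^ p ≤ ε * v r 0 ^ p := by
          have e1 : ε ^ p = ε * ε ^ (p-1) := by
            rw [← Real.rpow_one_add' hε.le (by linarith)]; congr 1; ring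
          have e2 : v r 0 ^ p = v r 0 * v r 0 ^ (p-1) := by
            rw [← Real.rpow_one_add' ha0.le (by linarith)]; congr 1; ring
          rw [e1, e2]
          have : ε ^ (p-1) ≤ v r 0 ^ (p-1) := Real.rpow_le_rpow hε.le ha (by linarith)
          have := mul_le_mul_of_nonneg_left this (mul_pos hε ha0).le
          linarith
        rw [hx]
        have : v r 0 ≤ ε / ε ^ p * v r 0 ^ p := by
          rw [div_mul_eq_mul_div, le_div_iff₀ hεp]; exact this
        linarith
      rw [f3]; linarith
    have e2 : ε ≤ ∫ r in t..(t+1), ∫ y in (0:ℝ)..x, (w r y - w r 0) := by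
      have : ∫ r in t..(t+1), ε ≤ ∫ r in t..(t+1), ∫ y in (0:ℝ)..x, (w r y - w r 0) := by
        apply intervalIntegral.integral_mono_on htt
        · exact Continuous.intervalIntegrable (by fun_prop) _ _
        · exact Continuous.intervalIntegrable (by fun_prop) _ _
        intro r hr
        exact (hcon r hr).trans (e1 r hr)
      simpa using this
    rw [swap_cont (fun r y => w r y - w r 0) (by fun_prop)] at e2
    have e3 : ∫ y in (0:ℝ)..x, ∫ r in t..(t+1), (w r y - w r 0) ≤ ∫ y in (0:ℝ)..x, ε / (2*x) := by
      apply intervalIntegral.integral_mono_on hx0.le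
      · exact Continuous.intervalIntegrable (by fun_prop) _ _
      · exact Continuous.intervalIntegrable (by fun_prop) _ _
      intro y hy
      exact (le_abs_self _).trans (hJ y hy)
    have e4 : ∫ y in (0:ℝ)..x, ε / (2*x) = ε / 2 := by
      simp; field_simp
    linarith
  · push Not at hun
    obtain ⟨L, hL⟩ := hun
    have hL0 : 0 < L := (H.s_pos 1).trans (hL 1 le_rfl)
    obtain ⟨T1, hT1, hT1s⟩ := mono_small s (fun a b _ h => H.s_mono h) L (fun a h => (hL a h).le)
      (ε^p/4) (by positivity)
    obtain ⟨T2, hT2, hT2s⟩ := H.En_small hp ((ε^p/4)^2 / L) (by positivity)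
    refine ⟨max T1 T2, hT1.trans (le_max_left _ _), fun t ht => ?_⟩
    have ht1 : T1 ≤ t := (le_max_left _ _).trans ht
    have ht2 : T2 ≤ t := (le_max_right _ _).trans ht
    have h1t : 1 ≤ t := hT1.trans ht1
    by_contra hcon
    push Not at hcon
    have htt : t ≤ t + 1 := by linarith
    have N := hT2s t (t+1) ht2 htt
    have S := hT1s t (t+1) ht1 htt
    have J := H.Kest1 hp t (t+1) h1t htt le_rfl s hs L hL0.le
      (fun r hr => ⟨(H.s_pos r).le, le_rfl, (hL r (h1t.trans hr.1)).le⟩) (ε^p/4) (by positivity)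
      (by calc _ ≤ L * ((ε^p/4)^2 / L) := by gcongr
            _ = _ := by field_simp)
    have hds := H.ds_cont
    have e0 : ∀ r, w r (s r) - w r 0 = v r 0 ^ p - ds r := by
      intro r; rw [H.bc0, H.stefan]; ring
    simp_rw [e0] at J
    rw [intervalIntegral.integral_sub] at J
    rotate_left
    · exact Continuous.intervalIntegrable (by fun_prop) _ _
    · exact Continuous.intervalIntegrable (by fun_prop) _ _
    have e1 := H.s_int t (t+1) h1t htt
    have e2 : ∫ r in t..(t+1), ε^p ≤ ∫ r in t..(t+1), v r 0 ^ p := by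
      apply intervalIntegral.integral_mono_on htt
      · exact Continuous.intervalIntegrable (by fun_prop) _ _
      · exact Continuous.intervalIntegrable (by fun_prop) _ _
      intro r hr
      exact Real.rpow_le_rpow hε.le (hcon r hr) (by linarith)
    simp at e2
    have := (abs_le.1 J).2
    linarith

lemma a_small (H : AbsSol p s ds v w) (hp : 1 < p) (ε : ℝ) (hε : 0 < ε) :
    ∃ T, 1 ≤ T ∧ ∀ t, T ≤ t → v t 0 ≤ 2 * ε := by
  have hv := H.v_cont
  have hw := H.w_cont
  obtain ⟨T1, hT1, hT1s⟩ := H.window hp ε hε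
  set C := 2 * (En p s v w 1 + (2*ε)^(p+1)) with hC
  have hE1 := H.En_nonneg hp 1 le_rfl
  have hC0 : 0 < C := by
    have : 0 < (2*ε)^(p+1) := Real.rpow_pos_of_pos (by linarith) _
    rw [hC]; linarith
  set l := min (s 1) ((ε/8)^2 / C) with hl
  have hl0 : 0 < l := lt_min (H.s_pos 1) (by positivity)
  have hls : l ≤ s 1 := min_le_left _ _
  have hlC : l * C ≤ (ε/8)^2 := by
    rw [← le_div_iff₀ hC0]; exact min_le_right _ _
  obtain ⟨T2, hT2, hT2s⟩ := H.En_small hp (l * (ε/2)^2) (by positivity)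
  refine ⟨max T1 T2 + 1, by linarith [le_max_left T1 T2], fun t ht => ?_⟩
  have ht1 : T1 ≤ t - 1 := by linarith [le_max_left T1 T2]
  have ht2 : T2 ≤ t - 1 := by linarith [le_max_right T1 T2]
  by_contra hcon
  push Not at hcon
  obtain ⟨α, hα, hαε⟩ := hT1s (t-1) ht1
  have hαt : α ≤ t := by linarith [hα.2]
  have hcont : ContinuousOn (fun t => v t 0) (Icc α t) := Continuous.continuousOn (by fun_prop)
  obtain ⟨β, hβ, hβε⟩ := intermediate_value_Icc hαt hcont
    (⟨by linarith, by linarith⟩ : 2 * ε ∈ Icc (v α 0) (v t 0))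
  simp only at hβε
  have h1α : 1 ≤ α := by linarith [hα.1]
  have near : ∀ τ, 1 ≤ τ → v τ 0 ≤ 2 * ε → ∀ y ∈ Icc 0 l, |v τ y - v τ 0| ≤ ε / 8 := by
    intro τ hτ hτε y hy
    have hys : y ≤ s τ := hy.2.trans (hls.trans (H.s_mono hτ))
    rw [H.F1 τ y hy.1 hys, add_sub_cancel_left]
    apply abs_le_of_sq_le_sq _ (by positivity)
    refine (cs_int (w τ) (by fun_prop) 0 y hy.1).trans ?_
    have i1 : ∫ x in (0:ℝ)..y, (w τ x)^2 ≤ ∫ x in (0:ℝ)..s τ, (w τ x)^2 := by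
      apply intervalIntegral.integral_mono_interval le_rfl hy.1 hys
      · exact Eventually.of_forall fun x => sq_nonneg _
      · exact Continuous.intervalIntegrable (by fun_prop) _ _
    have i2 : ∫ x in (0:ℝ)..s τ, (w τ x)^2 ≤ C := by
      have h1 := H.En_anti hp 1 τ le_rfl hτ
      have : En p s v w τ = 1 / 2 * (∫ x in (0:ℝ)..s τ, (w τ x)^2) - v τ 0 ^ (p+1) / (p+1) := rfl
      have h2 : v τ 0 ^ (p+1) / (p+1) ≤ (2*ε)^(p+1) := by
        have h3 : v τ 0 ^ (p+1) ≤ (2*ε)^(p+1) :=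
          Real.rpow_le_rpow (H.v_nonneg τ 0) hτε (by linarith)
        have h4 : 0 ≤ v τ 0 ^ (p+1) := Real.rpow_nonneg (H.v_nonneg τ 0) _
        exact (div_le_self h4 (by linarith)).trans h3
      rw [hC]; linarith
    have i3 : 0 ≤ ∫ x in (0:ℝ)..y, (w τ x)^2 :=
      intervalIntegral.integral_nonneg hy.1 (fun _ _ => sq_nonneg _)
    calc _ ≤ l * C := by
          rw [sub_zero]
          exact mul_le_mul hy.2 (i1.trans i2) i3 hl0.le
      _ ≤ _ := hlC
  have n1 := near α h1α (by linarith)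
  have n2 := near β (h1α.trans hβ.1) hβε.le
  have f2 := H.F2 α β l h1α hβ.1 hl0.le (hls.trans (H.s_mono h1α))
  have N := hT2s α β (by linarith [hα.1]) hβ.1
  have J := H.Kest1 hp α β h1α hβ.1 (by linarith [hα.1, hβ.2]) (fun _ => l) continuous_const l
    hl0.le (fun r hr => ⟨hl0.le, hls.trans (H.s_mono (h1α.trans hr.1)), le_rfl⟩) (l * (ε/2))
    (by positivity)
    (by calc _ ≤ l * (l * (ε/2)^2) := by gcongr
          _ = _ := by ring)
  rw [← f2] at J
  have e2 : ∫ y in (0:ℝ)..l, (3/4*ε) ≤ ∫ y in (0:ℝ)..l, (v β y - v α y) := by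
    apply intervalIntegral.integral_mono_on hl0.le
    · exact Continuous.intervalIntegrable (by fun_prop) _ _
    · exact Continuous.intervalIntegrable (by fun_prop) _ _
    intro y hy
    have := (abs_le.1 (n1 y hy)).2
    have := (abs_le.1 (n2 y hy)).1
    linarith
  simp only [intervalIntegral.integral_const, sub_zero, smul_eq_mul] at e2
  have := (abs_le.1 J).2
  have : 0 < l * ε := by positivity
  linarith

end AbsSol

namespace GS
variable {p s₀ : ℝ} {φ : ℝ → ℝ} {s : ℝ → ℝ} {u : ℝ → ℝ → ℝ}

lemma ext_cont (f : ℝ × ℝ → ℝ) (A : ℝ → Set ℝ) 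
    (h : ∀ T, 0 < T → ContinuousOn f {q : ℝ × ℝ | q.1 ∈ Ioc 0 T ∧ q.2 ∈ A q.1}) :
    ContinuousOn f {q : ℝ × ℝ | 0 < q.1 ∧ q.2 ∈ A q.1} := by
  intro q hq
  have hq1 : 0 < q.1 := hq.1
  have h1 := h (q.1 + 1) (by linarith) q ⟨⟨hq.1, by linarith⟩, hq.2⟩
  apply h1.mono_of_mem_nhdsWithin
  have : {r : ℝ × ℝ | r.1 < q.1 + 1} ∈ 𝓝 q :=
    (isOpen_lt continuous_fst continuous_const).mem_nhds (by simp)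
  filter_upwards [mem_nhdsWithin_of_mem_nhds this, self_mem_nhdsWithin] with r h1 h2
  exact ⟨⟨h2.1, le_of_lt h1⟩, h2.2⟩

lemma ux_c (H : IsGlobalSol p s₀ φ s u) : ContinuousOn (fun q : ℝ × ℝ => deriv (u q.1) q.2)
      {q : ℝ × ℝ | 0 < q.1 ∧ q.2 ∈ Icc 0 (s q.1)} :=
  ext_cont _ (fun t => Icc 0 (s t)) (fun T hT => (H T hT).ux_cont)

lemma uxx_c (H : IsGlobalSol p s₀ φ s u) :
    ContinuousOn (fun q : ℝ × ℝ => deriv (deriv (u q.1)) q.2)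
      {q : ℝ × ℝ | 0 < q.1 ∧ q.2 ∈ Ioo 0 (s q.1)} :=
  ext_cont _ (fun t => Ioo 0 (s t)) (fun T hT => (H T hT).uxx_cont)

lemma u_c (H : IsGlobalSol p s₀ φ s u) : ContinuousOn (fun q : ℝ × ℝ => u q.1 q.2)
      {q : ℝ × ℝ | 0 < q.1 ∧ q.2 ∈ Icc 0 (s q.1)} :=
  ext_cont _ (fun t => Icc 0 (s t)) (fun T hT => (H T hT).u_cont.mono
    (fun q hq => ⟨⟨hq.1.1.le, hq.1.2⟩, hq.2⟩))

lemma s_d (H : IsGlobalSol p s₀ φ s u) (t : ℝ) (ht : 0 < t) : HasDerivAt s (deriv s t) t :=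
  ((H t ht).s_diff t ⟨ht, le_rfl⟩).hasDerivAt

lemma s_p (H : IsGlobalSol p s₀ φ s u) (t : ℝ) (ht : 0 < t) : 0 < s t :=
  (H t ht).s_pos t ⟨ht.le, le_rfl⟩

lemma ds_c (H : IsGlobalSol p s₀ φ s u) : ContinuousOn (deriv s) (Ioi 0) := by
  intro t ht
  have ht : 0 < t := ht
  have h1 := (H (t+1) (by linarith)).s_deriv_cont t ⟨ht, by linarith⟩
  exact (h1.continuousAt (Ioc_mem_nhds ht (by linarith))).continuousWithinAt

lemma u_nn (H : IsGlobalSol p s₀ φ s u) (t x : ℝ) (ht : 0 < t) (hx : x ∈ Icc 0 (s t)) :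
    0 ≤ u t x := (H t ht).u_nonneg t ⟨ht.le, le_rfl⟩ x hx

lemma u_x (H : IsGlobalSol p s₀ φ s u) (t x : ℝ) (ht : 0 < t) (hx : x ∈ Ioo 0 (s t)) :
    HasDerivAt (u t) (deriv (u t) x) x :=
  ((H t ht).ux_diff t ⟨ht, le_rfl⟩ x hx).hasDerivAt

lemma u_xx (H : IsGlobalSol p s₀ φ s u) (t x : ℝ) (ht : 0 < t) (hx : x ∈ Ioo 0 (s t)) :
    HasDerivAt (deriv (u t)) (deriv (deriv (u t)) x) x :=
  ((H t ht).uxx_diff t ⟨ht, le_rfl⟩ x hx).hasDerivAt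

lemma u_t (H : IsGlobalSol p s₀ φ s u) (t x : ℝ) (ht : 0 < t) (hx : x ∈ Ioo 0 (s t)) :
    HasDerivAt (fun τ => u τ x) (deriv (deriv (u t)) x) t := by
  rw [← (H t ht).heat t ⟨ht, le_rfl⟩ x hx]
  exact ((H t ht).ut_diff t ⟨ht, le_rfl⟩ x hx).hasDerivAt

lemma u_cx (H : IsGlobalSol p s₀ φ s u) (t : ℝ) (ht : 0 < t) : ContinuousOn (u t) (Icc 0 (s t)) :=
  (u_c H).comp (f := fun x => (t, x)) (by fun_prop) (fun x hx => ⟨ht, hx⟩)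

lemma ux_cx (H : IsGlobalSol p s₀ φ s u) (t : ℝ) (ht : 0 < t) :
    ContinuousOn (deriv (u t)) (Icc 0 (s t)) :=
  (ux_c H).comp (f := fun x => (t, x)) (by fun_prop) (fun x hx => ⟨ht, hx⟩)

lemma ds_nn (H : IsGlobalSol p s₀ φ s u) (t : ℝ) (ht : 0 < t) : 0 ≤ deriv s t := by
  rw [(H t ht).stefan t ⟨ht, le_rfl⟩, neg_nonneg]
  by_contra hcon
  push Not at hcon
  have hs := s_p H t ht
  have h1 := ux_cx H t ht (s t) ⟨hs.le, le_rfl⟩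
  have h2 := h1.eventually_const_lt hcon
  rw [eventually_nhdsWithin_iff, Metric.eventually_nhds_iff] at h2
  obtain ⟨δ, hδ, h2⟩ := h2
  set x := max 0 (s t - δ/2) with hx
  have hx0 : 0 ≤ x := le_max_left _ _
  have hxs : x < s t := max_lt hs (by linarith)
  have hxδ : s t - δ/2 ≤ x := le_max_right _ _
  obtain ⟨y, hy, hy2⟩ := exists_deriv_eq_slope (u t) hxs
    ((u_cx H t ht).mono (Icc_subset_Icc hx0 le_rfl))
    (fun y hy => (u_x H t y ht ⟨hx0.trans_lt hy.1, hy.2⟩).differentiableAt.differentiableWithinAt)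
  have h3 := h2 (y := y) (by rw [Real.dist_eq, abs_lt]; constructor <;> linarith [hy.1, hy.2])
    ⟨hx0.trans hy.1.le, hy.2.le⟩
  rw [hy2, (H t ht).bc_free t ⟨ht, le_rfl⟩] at h3
  have h4 := u_nn H t x ht ⟨hx0, hxs.le⟩
  have : (0 - u t x) / (s t - x) ≤ 0 := div_nonpos_of_nonpos_of_nonneg (by linarith) (by linarith)
  linarith

lemma s_mo (H : IsGlobalSol p s₀ φ s u) : MonotoneOn s (Ioi 0) := by
  apply monotoneOn_of_deriv_nonneg (convex_Ioi 0)
  · exact fun t ht => (s_d H t ht).continuousAt.continuousWithinAt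
  · intro t ht
    rw [interior_Ioi] at ht
    exact (s_d H t ht).differentiableAt.differentiableWithinAt
  · intro t ht
    rw [interior_Ioi] at ht
    exact ds_nn H t ht

def cl (s : ℝ → ℝ) (t x : ℝ) : ℝ := max 0 (min x (s (max t 1)))
def vv (s : ℝ → ℝ) (u : ℝ → ℝ → ℝ) (t x : ℝ) : ℝ := u (max t 1) (cl s t x)
def ww (s : ℝ → ℝ) (u : ℝ → ℝ → ℝ) (t x : ℝ) : ℝ := deriv (u (max t 1)) (cl s t x)

lemma one_pos' (t : ℝ) : 0 < max t 1 := lt_of_lt_of_le one_pos (le_max_right _ _)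

lemma sm_cont (H : IsGlobalSol p s₀ φ s u) : Continuous fun t => s (max t 1) := by
  have : ContinuousOn s (Ioi 0) := fun t ht => (s_d H t ht).continuousAt.continuousWithinAt
  exact this.comp_continuous (by fun_prop) (fun t => one_pos' t)

lemma cl_mem (H : IsGlobalSol p s₀ φ s u) (t x : ℝ) : cl s t x ∈ Icc 0 (s (max t 1)) :=
  ⟨le_max_left _ _, max_le (s_p H _ (one_pos' t)).le (min_le_right _ _)⟩

lemma cl_eq (t x : ℝ) (hx : 0 ≤ x) (hx2 : x ≤ s (max t 1)) : cl s t x = x := by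
  unfold cl; rw [min_eq_left hx2, max_eq_right hx]

lemma cl_cont (H : IsGlobalSol p s₀ φ s u) : Continuous (Function.uncurry (cl s)) := by
  have := sm_cont H
  unfold cl
  have h2 : Continuous fun q : ℝ × ℝ => s (max q.1 1) := this.comp continuous_fst
  exact continuous_const.max (continuous_snd.min h2)

lemma vv_cont (H : IsGlobalSol p s₀ φ s u) : Continuous (Function.uncurry (vv s u)) := by
  have h := cl_cont H
  exact (u_c H).comp_continuous (f := fun q : ℝ × ℝ => (max q.1 1, cl s q.1 q.2))
    ((by fun_prop : Continuous fun q : ℝ × ℝ => max q.1 1).prodMk h)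
    (fun q => ⟨one_pos' _, cl_mem H _ _⟩)

lemma ww_cont (H : IsGlobalSol p s₀ φ s u) : Continuous (Function.uncurry (ww s u)) := by
  have h := cl_cont H
  exact (ux_c H).comp_continuous (f := fun q : ℝ × ℝ => (max q.1 1, cl s q.1 q.2))
    ((by fun_prop : Continuous fun q : ℝ × ℝ => max q.1 1).prodMk h)
    (fun q => ⟨one_pos' _, cl_mem H _ _⟩)

lemma vF1 (H : IsGlobalSol p s₀ φ s u) (t x : ℝ) (hx : 0 ≤ x) (hx2 : x ≤ s (max t 1)) :
    vv s u t x = vv s u t 0 + ∫ y in (0:ℝ)..x, ww s u t y := by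
  have hv := vv_cont H
  have hw := ww_cont H
  have := intervalIntegral.integral_eq_sub_of_hasDerivAt_of_le hx (f := vv s u t)
    (f' := ww s u t) (Continuous.continuousOn (by fun_prop)) (fun y hy => by
      have hy' : y ∈ Ioo 0 (s (max t 1)) := ⟨hy.1, hy.2.trans_le hx2⟩
      have h1 := u_x H (max t 1) y (one_pos' t) hy'
      have e : ww s u t y = deriv (u (max t 1)) y := by
        unfold ww; rw [cl_eq t y hy'.1.le hy'.2.le]
      rw [e]
      refine h1.congr_of_eventuallyEq ?_
      filter_upwards [Ioo_mem_nhds hy'.1 hy'.2] with z hz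
      unfold vv; rw [cl_eq t z hz.1.le hz.2.le])
    (Continuous.intervalIntegrable (by fun_prop) _ _)
  rw [this]; ring

lemma vF2_int (H : IsGlobalSol p s₀ φ s u) (t t' x0 x1 : ℝ) (ht : 1 ≤ t) (htt : t ≤ t')
    (hx0 : 0 < x0) (hx : x0 ≤ x1) (hx1 : x1 < s t) :
    ∫ y in x0..x1, (vv s u t' y - vv s u t y) = ∫ τ in t..t', (ww s u τ x1 - ww s u τ x0) := by
  have hsm : ∀ τ, t ≤ τ → s t ≤ s τ := fun τ hτ =>
    s_mo H (show 0 < t by linarith) (show 0 < τ by linarith) hτ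
  set g : ℝ → ℝ → ℝ := fun τ y =>
    deriv (deriv (u (max t τ))) (max x0 (min y x1)) with hg
  have hgc : Continuous (Function.uncurry g) := by
    refine (uxx_c H).comp_continuous (f := fun q : ℝ × ℝ => (max t q.1, max x0 (min q.2 x1)))
      (by fun_prop) (fun q => ⟨?_, ?_, ?_⟩)
    · exact lt_of_lt_of_le (by linarith) (le_max_left t q.1)
    · exact lt_of_lt_of_le hx0 (le_max_left _ _)
    · exact lt_of_le_of_lt (max_le hx (min_le_right _ _)) (hx1.trans_le (hsm _ (le_max_left _ _)))
  have hge : ∀ τ y, t ≤ τ → y ∈ Icc x0 x1 → g τ y = deriv (deriv (u τ)) y := by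
    intro τ y hτ hy
    simp only [hg]
    rw [max_eq_right hτ, min_eq_left hy.2, max_eq_right hy.1]
  have mem : ∀ τ y, t ≤ τ → y ∈ Icc x0 x1 → y ∈ Ioo 0 (s τ) := fun τ y hτ hy =>
    ⟨hx0.trans_le hy.1, hy.2.trans_lt (hx1.trans_le (hsm τ hτ))⟩
  have hve : ∀ τ y, t ≤ τ → y ∈ Icc x0 x1 → vv s u τ y = u τ y := by
    intro τ y hτ hy
    have := mem τ y hτ hy
    unfold vv
    have e : max τ 1 = τ := max_eq_left (ht.trans hτ)
    rw [cl_eq τ y this.1.le (by rw [e]; exact this.2.le), e]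
  have hwe : ∀ τ y, t ≤ τ → y ∈ Icc x0 x1 → ww s u τ y = deriv (u τ) y := by
    intro τ y hτ hy
    have := mem τ y hτ hy
    unfold ww
    have e : max τ 1 = τ := max_eq_left (ht.trans hτ)
    rw [cl_eq τ y this.1.le (by rw [e]; exact this.2.le), e]
  have e1 : ∫ y in x0..x1, (vv s u t' y - vv s u t y) = ∫ y in x0..x1, ∫ τ in t..t', g τ y := by
    apply intervalIntegral.integral_congr
    intro y hy
    rw [uIcc_of_le hx] at hy
    simp only
    rw [hve t' y htt hy, hve t y le_rfl hy]
    symm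
    apply intervalIntegral.integral_eq_sub_of_hasDerivAt (f := fun τ => u τ y)
    · intro τ hτ
      rw [uIcc_of_le htt] at hτ
      rw [hge τ y hτ.1 hy]
      exact u_t H τ y (by linarith [hτ.1]) (mem τ y hτ.1 hy)
    · exact Continuous.intervalIntegrable (by fun_prop) _ _
  have e2 : ∫ τ in t..t', (ww s u τ x1 - ww s u τ x0) = ∫ τ in t..t', ∫ y in x0..x1, g τ y := by
    apply intervalIntegral.integral_congr
    intro τ hτ
    rw [uIcc_of_le htt] at hτ
    simp only
    rw [hwe τ x1 hτ.1 ⟨hx, le_rfl⟩, hwe τ x0 hτ.1 ⟨le_rfl, hx⟩]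
    symm
    apply intervalIntegral.integral_eq_sub_of_hasDerivAt (f := deriv (u τ))
    · intro y hy
      rw [uIcc_of_le hx] at hy
      rw [hge τ y hτ.1 hy]
      exact u_xx H τ y (by linarith [hτ.1]) (mem τ y hτ.1 hy)
    · exact Continuous.intervalIntegrable (by fun_prop) _ _
  rw [e1, e2, swap_cont g hgc]

lemma vF2 (H : IsGlobalSol p s₀ φ s u) (t t' x : ℝ) (ht : 1 ≤ t) (htt : t ≤ t')
    (hx : 0 ≤ x) (hx1 : x ≤ s t) :
    ∫ y in (0:ℝ)..x, (vv s u t' y - vv s u t y) = ∫ τ in t..t', (ww s u τ x - ww s u τ 0) := by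
  have hv := vv_cont H
  have hw := ww_cont H
  have hs := s_p H t (by linarith)
  set m := s t / 2 with hm
  have hm0 : 0 < m := by positivity
  have c0 : Continuous fun z => ∫ y in (0:ℝ)..z, (vv s u t' y - vv s u t y) :=
    intervalIntegral.continuous_primitive (fun a b => Continuous.intervalIntegrable (by fun_prop) _ _) 0
  have c1 : Continuous fun θ : ℝ => (∫ y in (0:ℝ)..(x + θ * (m - x)), (vv s u t' y - vv s u t y)) -
      ∫ y in (0:ℝ)..(θ * m), (vv s u t' y - vv s u t y) :=
    (c0.comp (by fun_prop : Continuous fun θ : ℝ => x + θ * (m - x))).sub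
      (c0.comp (by fun_prop : Continuous fun θ : ℝ => θ * m))
  have c2 : Continuous fun θ : ℝ =>
      ∫ τ in t..t', (ww s u τ (x + θ * (m - x)) - ww s u τ (θ * m)) := by fun_prop
  have l1 := (c1.tendsto 0).mono_left (nhdsWithin_le_nhds (s := Ioi 0))
  have l2 := (c2.tendsto 0).mono_left (nhdsWithin_le_nhds (s := Ioi 0))
  have l3 := tendsto_nhds_unique (l1.congr' (by
    filter_upwards [Ioo_mem_nhdsGT (zero_lt_one' ℝ)] with θ hθ
    rw [intervalIntegral.integral_interval_sub_left
      (Continuous.intervalIntegrable (by fun_prop) _ _)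
      (Continuous.intervalIntegrable (by fun_prop) _ _)]
    have := vF2_int H t t' (θ * m) (x + θ * (m - x)) ht htt (mul_pos hθ.1 hm0)
      (by nlinarith [hθ.2]) (by nlinarith [hθ.1, hθ.2])
    rw [this])) l2
  simpa using l3

theorem toAbs (H : IsGlobalSol p s₀ φ s u) :
    AbsSol p (fun t => s (max t 1)) (fun t => deriv s (max t 1)) (vv s u) (ww s u) where
  s_cont := sm_cont H
  s_mono := fun a b hab => s_mo H (one_pos' a) (one_pos' b) (max_le_max_right 1 hab)
  s_pos := fun t => s_p H _ (one_pos' t)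
  ds_cont := (ds_c H).comp_continuous (by fun_prop) (fun t => one_pos' t)
  ds_nonneg := fun t => ds_nn H _ (one_pos' t)
  s_int := by
    intro t t' h1 h2
    have hc : Continuous fun t => deriv s (max t 1) :=
      (ds_c H).comp_continuous (by fun_prop) (fun t => one_pos' t)
    have := intervalIntegral.integral_eq_sub_of_hasDerivAt (a := t) (b := t') (f := s)
      (f' := fun t => deriv s (max t 1)) (fun y hy => by
        rw [uIcc_of_le h2] at hy
        rw [max_eq_left (h1.trans hy.1)]
        exact s_d H y (by linarith [hy.1])) (hc.intervalIntegrable _ _)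
    rw [this, max_eq_left h1, max_eq_left (h1.trans h2)]; ring
  v_cont := vv_cont H
  w_cont := ww_cont H
  v_nonneg := fun t x => u_nn H _ _ (one_pos' t) (cl_mem H t x)
  F1 := fun t x h1 h2 => vF1 H t x h1 h2
  F2 := fun t t' x h1 h2 h3 h4 => vF2 H t t' x h1 h2 h3 (by rwa [max_eq_left h1] at h4)
  bc0 := by
    intro t
    have := (H _ (one_pos' t)).bc_zero _ ⟨one_pos' t, le_rfl⟩
    unfold ww vv
    rw [cl_eq t 0 le_rfl (s_p H _ (one_pos' t)).le]
    linarith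
  bcs := by
    intro t
    unfold vv
    rw [cl_eq t _ (s_p H _ (one_pos' t)).le le_rfl]
    exact (H _ (one_pos' t)).bc_free _ ⟨one_pos' t, le_rfl⟩
  stefan := by
    intro t
    unfold ww
    rw [cl_eq t _ (s_p H _ (one_pos' t)).le le_rfl]
    exact (H _ (one_pos' t)).stefan _ ⟨one_pos' t, le_rfl⟩

lemma a_lim (H : IsGlobalSol p s₀ φ s u) (hp : 1 < p) (ε : ℝ) (hε : 0 < ε) :
    ∃ T, 1 ≤ T ∧ ∀ t, T ≤ t → u t 0 ≤ ε := by
  obtain ⟨T, h1, h2⟩ := (toAbs H).a_small hp (ε/2) (by linarith)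
  refine ⟨T, h1, fun t ht => ?_⟩
  have := h2 t ht
  unfold vv at this
  rw [cl_eq t 0 le_rfl (s_p H _ (one_pos' t)).le, max_eq_left (h1.trans ht)] at this
  linarith

end GS

lemma second_test (f f' : ℝ → ℝ) (x c : ℝ) (h1 : ∀ᶠ y in 𝓝 x, HasDerivAt f (f' y) y)
    (h2 : HasDerivAt f' c x) (hm : IsLocalMax f x) : c ≤ 0 := by
  by_contra hc
  push Not at hc
  have e : deriv f =ᶠ[𝓝 x] f' := by
    filter_upwards [h1] with y hy using hy.deriv
  have h3 : deriv (deriv f) x = c := by rw [e.deriv_eq, h2.deriv]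
  have h4 := isLocalMin_of_deriv_deriv_pos (f := f) (x₀ := x) (by rw [h3]; exact hc)
    hm.deriv_eq_zero h1.self_of_nhds.continuousAt
  have h5 : f =ᶠ[𝓝 x] fun _ => f x := by
    filter_upwards [h4, hm] with y a b using le_antisymm b a
  have h6 : deriv f =ᶠ[𝓝 x] fun _ => 0 := by
    have := h5.deriv
    filter_upwards [this] with y hy
    rw [hy]; simp
  have h7 : deriv (deriv f) x = 0 := by rw [h6.deriv_eq]; simp
  linarith

/-- heat kernel barrier -/
def psi (τ x : ℝ) : ℝ := (√τ)⁻¹ * exp (-(x^2) / (4 * τ))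

lemma psi_x (τ x : ℝ) : HasDerivAt (psi τ) (-(x / (2*τ)) * psi τ x) x := by
  unfold psi
  have := ((((hasDerivAt_id x).pow 2).neg.div_const (4*τ)).exp).const_mul ((√τ)⁻¹)
  refine this.congr_deriv ?_
  simp
  ring

lemma psi_xx (τ x : ℝ) : HasDerivAt (fun x => -(x / (2*τ)) * psi τ x)
    ((x^2/(4*τ^2) - 1/(2*τ)) * psi τ x) x := by
  have := (((hasDerivAt_id x).div_const (2*τ)).neg).mul (psi_x τ x)
  refine this.congr_deriv ?_
  simp
  ring

lemma psi_t (τ x : ℝ) (hτ : 0 < τ) : HasDerivAt (fun τ => psi τ x)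
    ((x^2/(4*τ^2) - 1/(2*τ)) * psi τ x) τ := by
  have h1 := ((Real.hasDerivAt_sqrt hτ.ne').inv (Real.sqrt_pos.2 hτ).ne')
  have h2 := ((hasDerivAt_const τ (-(x^2))).div ((hasDerivAt_id τ).const_mul 4)
    (by simpa using hτ.ne')).exp
  have := h1.mul h2
  unfold psi
  refine this.congr_deriv ?_
  have hs : 0 < √τ := Real.sqrt_pos.2 hτ
  have e : √τ ^ 2 = τ := Real.sq_sqrt hτ.le
  simp only [id, e, Pi.div_apply, Pi.inv_apply]
  generalize exp (-(x^2) / (4 * τ)) = E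
  field_simp
  ring

namespace GS
variable {p s₀ : ℝ} {φ : ℝ → ℝ} {s : ℝ → ℝ} {u : ℝ → ℝ → ℝ}

lemma barrier_d (H : IsGlobalSol p s₀ φ s u) (T ε K δ T2 : ℝ) (hT : 1 ≤ T) (hε : 0 < ε)
    (hδ : 0 < δ) (hK : 0 ≤ K)
    (ha : ∀ t, T ≤ t → u t 0 ≤ ε)
    (hinit : ∀ x ∈ Icc 0 (s T), u T x ≤ K * psi 1 x) :
    ∀ t ∈ Icc T T2, ∀ x ∈ Icc 0 (s t), u t x ≤ ε + K * psi (t - T + 1) x + δ * (t - T) := by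
  intro t ht x hx
  set Z : ℝ → ℝ → ℝ := fun t x => u t x - ε - K * psi (t - T + 1) x - δ * (t - T) with hZ
  have hTT2 : T ≤ T2 := ht.1.trans ht.2
  have hsc : ContinuousOn s (Ioi 0) := fun t ht => (s_d H t ht).continuousAt.continuousWithinAt
  set C := Icc T T2 ×ˢ Icc (0:ℝ) 1 with hC
  have hCc : IsCompact C := isCompact_Icc.prod isCompact_Icc
  have hCp : ∀ q ∈ C, 0 < q.1 := fun q hq => by linarith [hq.1.1]
  have hCm : ∀ q ∈ C, q.2 * s q.1 ∈ Icc 0 (s q.1) := by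
    intro q hq
    have := s_p H q.1 (hCp q hq)
    refine ⟨mul_nonneg hq.2.1 this.le, ?_⟩
    nlinarith [hq.2.2]
  have c1 : ContinuousOn (fun q : ℝ × ℝ => s q.1) C :=
    hsc.comp continuous_fst.continuousOn hCp
  have c2 : ContinuousOn (fun q : ℝ × ℝ => q.2 * s q.1) C := continuous_snd.continuousOn.mul c1
  have c3 : ContinuousOn (fun q : ℝ × ℝ => u q.1 (q.2 * s q.1)) C :=
    (u_c H).comp (f := fun q : ℝ × ℝ => (q.1, q.2 * s q.1)) (continuous_fst.continuousOn.prodMk c2)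
      (fun q hq => ⟨hCp q hq, hCm q hq⟩)
  have c4 : ContinuousOn (fun q : ℝ × ℝ => psi (q.1 - T + 1) (q.2 * s q.1)) C := by
    unfold psi
    have d1 : ∀ q ∈ C, 0 < q.1 - T + 1 := fun q hq => by linarith [hq.1.1]
    refine ContinuousOn.mul (ContinuousOn.inv₀ ?_ ?_) (ContinuousOn.rexp (ContinuousOn.div ?_ ?_ ?_))
    · exact Continuous.continuousOn (by fun_prop)
    · exact fun q hq => (Real.sqrt_pos.2 (d1 q hq)).ne'
    · exact (c2.pow 2).neg
    · exact Continuous.continuousOn (by fun_prop)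
    · exact fun q hq => by have := d1 q hq; positivity
  have c5 : ContinuousOn (fun q : ℝ × ℝ => Z q.1 (q.2 * s q.1)) C := by
    simp only [hZ]
    exact ((c3.sub continuousOn_const).sub (c4.const_smul K)).sub
      (Continuous.continuousOn (by fun_prop))
  have hst := s_p H t (by linarith [ht.1])
  have hq0 : (t, x / s t) ∈ C := ⟨ht, div_nonneg hx.1 hst.le, (div_le_one hst).2 hx.2⟩
  obtain ⟨⟨r, θ⟩, hq, hmax⟩ := hCc.exists_isMaxOn ⟨_, hq0⟩ c5
  have hmax' : ∀ t' ∈ Icc T T2, ∀ x' ∈ Icc 0 (s t'), Z t' x' ≤ Z r (θ * s r) := by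
    intro t' ht' x' hx'
    have hst := s_p H t' (by linarith [ht'.1])
    have hm := hmax (show (t', x' / s t') ∈ C from
      ⟨ht', div_nonneg hx'.1 hst.le, (div_le_one hst).2 hx'.2⟩)
    have e : x' / s t' * s t' = x' := by field_simp
    have hm : Z t' (x' / s t' * s t') ≤ Z r (θ * s r) := hm
    rwa [e] at hm
  have hymem := hCm _ hq
  simp only at hymem
  have hr := hq.1
  simp only at hr
  clear hmax c5 c4 c3 c2 c1 hq0
  set y := θ * s r with hy
  clear_value y
  have hpsi : ∀ τ x, 0 ≤ psi τ x := fun τ x => by unfold psi; positivity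
  by_contra hcon
  push Not at hcon
  have hpos : 0 < Z r y := by
    have := hmax' t ht x hx
    have : 0 < Z t x := by simp only [hZ]; linarith
    linarith
  have hr0 : 0 < r := by linarith [hr.1]
  have hrT : T < r := by
    rcases hr.1.eq_or_lt with h | h
    · exfalso
      rw [← h] at hymem hpos
      have := hinit y hymem
      simp only [hZ] at hpos
      have e : T - T + 1 = 1 := by ring
      rw [e] at hpos
      linarith
    · exact h
  have hdr : 0 ≤ δ * (r - T) := by have : 0 < r - T := by linarith
                                   positivity
  have hy0 : 0 < y := by
    rcases hymem.1.eq_or_lt with h | h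
    · exfalso
      rw [← h] at hpos
      have := ha r hr.1
      have := mul_nonneg hK (hpsi (r - T + 1) 0)
      simp only [hZ] at hpos
      linarith
    · exact h
  have hys : y < s r := by
    rcases hymem.2.eq_or_lt with h | h
    · exfalso
      rw [h] at hpos
      have := (H r hr0).bc_free r ⟨hr0, le_rfl⟩
      have := mul_nonneg hK (hpsi (r - T + 1) (s r))
      simp only [hZ] at hpos
      linarith
    · exact h
  set P := ((y^2/(4*(r-T+1)^2) - 1/(2*(r-T+1))) * psi (r-T+1) y) with hP
  -- time derivative
  have dt : HasDerivAt (fun t => Z t y) (deriv (deriv (u r)) y - K * P - δ) r := by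
    have h1 := u_t H r y hr0 ⟨hy0, hys⟩
    have h2 : HasDerivAt (fun t => psi (t - T + 1) y) P r := by
      have := (psi_t (r-T+1) y (by linarith)).comp r (((hasDerivAt_id r).sub_const T).add_const 1)
      refine this.congr_deriv ?_
      simp [hP]
    have h3 := (((hasDerivAt_id r).sub_const T).const_mul δ)
    have := ((h1.sub_const ε).sub (h2.const_mul K)).sub h3
    refine this.congr_deriv ?_
    simp
  -- space derivatives
  have dxx : deriv (deriv (u r)) y - K * P ≤ 0 := by
    apply second_test (fun x => Z r x)
      (fun x => deriv (u r) x - K * (-(x / (2*(r-T+1))) * psi (r-T+1) x)) y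
    · filter_upwards [Ioo_mem_nhds hy0 hys] with z hz
      have h1 := u_x H r z hr0 hz
      exact ((h1.sub_const ε).sub ((psi_x (r-T+1) z).const_mul K)).sub_const _
    · exact (u_xx H r y hr0 ⟨hy0, hys⟩).sub ((psi_xx (r-T+1) y).const_mul K)
    · filter_upwards [Ioo_mem_nhds hy0 hys] with z hz
      exact hmax' r hr z ⟨hz.1.le, hz.2.le⟩
  have dneg : deriv (deriv (u r)) y - K * P - δ < 0 := by linarith
  -- contradiction: Z(·,y) is larger slightly before r
  have hslope := dt.tendsto_slope
  have hev := hslope.eventually_lt_const dneg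
  have hev2 : ∀ᶠ t' in 𝓝[<] r, slope (fun t => Z t y) r t' < 0 :=
    hev.filter_mono (nhdsWithin_mono r (fun z hz => ne_of_lt hz))
  have hev3 : ∀ᶠ t' in 𝓝[<] r, y < s t' :=
    nhdsWithin_le_nhds ((s_d H r hr0).continuousAt.eventually_const_lt hys)
  have hev4 : ∀ᶠ t' in 𝓝[<] r, t' ∈ Ioo T r := Ioo_mem_nhdsLT hrT
  obtain ⟨t', h1, h2, h3⟩ := (hev2.and (hev3.and hev4)).exists
  have h4 := hmax' t' ⟨h3.1.le, h3.2.le.trans hr.2⟩ y ⟨hy0.le, h2.le⟩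
  rw [slope_def_field] at h1
  have : 0 ≤ (Z t' y - Z r y) / (t' - r) :=
    div_nonneg_of_nonpos (by linarith) (by linarith [h3.2])
  linarith

lemma barrier (H : IsGlobalSol p s₀ φ s u) (T ε K : ℝ) (hT : 1 ≤ T) (hε : 0 < ε)
    (hK : 0 ≤ K)
    (ha : ∀ t, T ≤ t → u t 0 ≤ ε)
    (hinit : ∀ x ∈ Icc 0 (s T), u T x ≤ K * psi 1 x) (t : ℝ) (ht : T ≤ t) (x : ℝ)
    (hx : x ∈ Icc 0 (s t)) : u t x ≤ ε + K * psi (t - T + 1) x := by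
  apply le_of_forall_pos_le_add
  intro η hη
  have hd : 0 < t - T + 1 := by linarith
  have := barrier_d H T ε K (η / (t - T + 1)) t hT hε (by positivity) hK ha hinit t ⟨ht, le_rfl⟩ x hx
  have h2 : η / (t - T + 1) * (t - T) ≤ η := by
    rw [div_mul_eq_mul_div, div_le_iff₀ hd]
    nlinarith
  linarith

end GS

theorem stmt_15 (p : ℝ) (hp : 1 < p) (s₀ : ℝ) (φ : ℝ → ℝ) (hW : memW s₀ φ)
    (s : ℝ → ℝ) (u : ℝ → ℝ → ℝ) (hsol : IsGlobalSol p s₀ φ s u) :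
    Tendsto (fun t => supNorm s u t) atTop (𝓝 0) := by
  rw [Metric.tendsto_atTop]
  intro ε hε
  obtain ⟨T, hT, ha⟩ := GS.a_lim hsol hp (ε/4) (by linarith)
  have hT0 : 0 < T := by linarith
  obtain ⟨A, hA⟩ := isCompact_Icc.exists_bound_of_continuousOn (GS.u_cx hsol T hT0)
  set K := |A| * exp ((s T)^2 / 4) with hK
  have hK0 : 0 ≤ K := by positivity
  have hinit : ∀ x ∈ Icc 0 (s T), u T x ≤ K * psi 1 x := by
    intro x hx
    have h1 : u T x ≤ |A| := (le_abs_self _).trans ((hA x hx).trans (le_abs_self _))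
    have h2 : K * psi 1 x = |A| * exp ((s T)^2 / 4 + (-(x^2)/(4*1))) := by
      rw [hK, exp_add]; unfold psi; simp; ring
    have h3 : 1 ≤ exp ((s T)^2 / 4 + (-(x^2)/(4*1))) := by
      apply Real.one_le_exp
      have : x^2 ≤ (s T)^2 := pow_le_pow_left₀ hx.1 hx.2 2
      linarith
    rw [h2]
    nlinarith [abs_nonneg A]
  have hb := GS.barrier hsol T (ε/4) K hT (by linarith) hK0 ha hinit
  refine ⟨T + (4 * K / ε)^2, fun t ht => ?_⟩
  have hTt : T ≤ t := by nlinarith [sq_nonneg (4 * K / ε)]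
  have hd : 0 < t - T + 1 := by linarith
  have hall : ∀ x ∈ Ioo 0 (s t), u t x ≤ ε / 2 := by
    intro x hx
    have h1 := hb t hTt x ⟨hx.1.le, hx.2.le⟩
    have h2 : psi (t - T + 1) x ≤ (√(t - T + 1))⁻¹ := by
      unfold psi
      have : exp (-(x^2) / (4 * (t - T + 1))) ≤ 1 := by
        rw [Real.exp_le_one_iff]
        apply div_nonpos_of_nonpos_of_nonneg <;> nlinarith [sq_nonneg x]
      exact mul_le_of_le_one_right (by positivity) this
    have h3 : 4 * K / ε ≤ √(t - T + 1) := by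
      apply Real.le_sqrt_of_sq_le; linarith
    have h5 : 0 < √(t - T + 1) := Real.sqrt_pos.2 hd
    have h4 : K * (√(t - T + 1))⁻¹ ≤ ε / 4 := by
      rw [← div_eq_mul_inv, div_le_iff₀ h5]
      rw [div_le_iff₀ hε] at h3
      linarith
    have := mul_le_mul_of_nonneg_left h2 hK0
    linarith
  have ht0 : 0 < t := by linarith
  have hst := GS.s_p hsol t ht0
  have hne : (u t '' Ioo 0 (s t)).Nonempty := (nonempty_Ioo.2 hst).image _
  have h1 : supNorm s u t ≤ ε / 2 := csSup_le hne (by rintro _ ⟨x, hx, rfl⟩; exact hall x hx)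
  have h2 : 0 ≤ supNorm s u t := Real.sSup_nonneg (by
    rintro _ ⟨x, hx, rfl⟩; exact GS.u_nn hsol t x ht0 ⟨hx.1.le, hx.2.le⟩)
  rw [Real.dist_eq, sub_zero, abs_of_nonneg h2]
  linarith
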